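/- arXiv:2502.08394 — 2 statements merged into one kernel-verified Lean document; each statement's English description precedes it below -/
import Mathlib

section
/- For every dimension d ≥ 2, the critical point of Bernoulli bond percolation on ℤ^d satisfies 0 < p_c(ℤ^d) < 1. -/
open MeasureTheory

namespace Perc

/-- Vertices of `ℤ^d`. -/
abbrev Vertex (d : ℕ) := Fin d → ℤ

/-- Nearest-neighbour adjacency in `ℤ^d`: `‖x − y‖₁ = 1`. -/
def adj {d : ℕ} (x y : Vertex d) : Prop :=
  (∑ i, (x i - y i).natAbs) = 1

/-- The unordered pair `e` is a nearest-neighbour edge of `ℤ^d`. -/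
def IsEdge {d : ℕ} (e : Sym2 (Vertex d)) : Prop :=
  ∃ x y : Vertex d, adj x y ∧ e = s(x, y)

/-- The set `E` of nearest-neighbour edges of `ℤ^d`. -/
abbrev Edge (d : ℕ) := {e : Sym2 (Vertex d) // IsEdge e}

/-- Percolation configurations `ω ∈ {0,1}^E`. -/
abbrev Config (d : ℕ) := Edge d → Bool

/-- One step along an open edge of `ω`. -/
def step {d : ℕ} (ω : Config d) (x y : Vertex d) : Prop :=
  ∃ h : adj x y, ω ⟨s(x, y), x, y, h, rfl⟩ = true

/-- `x` and `y` are joined by a path of open edges. -/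
def Conn {d : ℕ} (ω : Config d) : Vertex d → Vertex d → Prop :=
  Relation.ReflTransGen (step ω)

/-- The open cluster of `x` in `ω`. -/
def cluster {d : ℕ} (ω : Config d) (x : Vertex d) : Set (Vertex d) :=
  {y | Conn ω x y}

/-- The box `Λ_n = {−n, …, n}^d`. -/
def box (d n : ℕ) : Set (Vertex d) := {x | ∀ i, |x i| ≤ (n : ℤ)}

/-- `∂Λ_n`: vertices of `Λ_n` having a nearest neighbour outside `Λ_n`. -/
def boxBoundary (d n : ℕ) : Set (Vertex d) :=
  {x | x ∈ box d n ∧ ∃ y, adj x y ∧ y ∉ box d n}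

/-- The origin of `ℤ^d`. -/
def origin (d : ℕ) : Vertex d := fun _ => 0

/-- The event `{0 ↔ ∂Λ_n}`. -/
def ZeroToBoundary (d n : ℕ) : Set (Config d) :=
  {ω | ∃ y ∈ boxBoundary d n, Conn ω (origin d) y}

/-- The event `{0 ↔ ∞}` that the open cluster of the origin is infinite. -/
def ZeroToInfinity (d : ℕ) : Set (Config d) :=
  {ω | (cluster ω (origin d)).Infinite}

/-- `μ` is the law of i.i.d. Bernoulli(p) edge variables: it is a probability measure on
`{0,1}^E` under which every finite cylinder has the corresponding product probability. -/
def IsBernoulli (d : ℕ) (p : ℝ) (μ : Measure (Config d)) : Prop :=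
  IsProbabilityMeasure μ ∧
    ∀ (s : Finset (Edge d)) (f : Edge d → Bool),
      μ {ω : Config d | ∀ e ∈ s, ω e = f e} =
        ENNReal.ofReal (∏ e ∈ s, if f e then p else 1 - p)

/-! **Near `p = 0`.** If the cluster of `0` is infinite, then for every `n` some path of length `n`
from `0` is open; there are at most `(2d)^n` such paths and each is open with probability `p^n`.

**Near `p = 1`.** Restrict to a quadrant of a coordinate plane and call a site good if its edges to
the right and upwards are open. Instead of using planar duality, renormalize: a `3 × 3` block of
sites is good if at most one of its sites is bad, and the blocks form again a quadrant, in which the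
construction is iterated. A good block is connected within, and two adjacent good blocks are joined
to each other, so if the block of `0` is good at all scales, then good sites connect `0` to
arbitrarily distant points. If sites are bad with probability `ε`, then blocks are bad with
probability at most `36 ε²`, so the probabilities of a bad block at scale `3^n` are summable with a
small sum.

The three union bounds (a bad site has a closed edge, a bad block has two bad sites, an infinite
cluster has a long path) are instances of a single one, `IsProductBounded.iUnion_iInter`, which
replaces independence by the weaker hypothesis that intersections of the events have at most product
probability. -/

open scoped ENNReal

section ProductBounded

variable {Ω X V : Type*} [MeasurableSpace Ω] {μ : Measure Ω} {B : X → Set Ω} {ε : ℝ≥0∞}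

/-- Any finitely many of the events `B x` occur together with at most the probability that
independent events of probability `ε` would have. -/
def IsProductBounded (μ : Measure Ω) (B : X → Set Ω) (ε : ℝ≥0∞) : Prop :=
  ∀ T : Finset X, μ (⋂ x ∈ T, B x) ≤ ε ^ T.card

namespace IsProductBounded

lemma measure_le (hB : IsProductBounded μ B ε) (x : X) : μ (B x) ≤ ε := by
  simpa using hB {x}

lemma mono {B' : X → Set Ω} {ε' : ℝ≥0∞} (hB : IsProductBounded μ B ε) (hB' : ∀ x, B' x ⊆ B x)
    (hε : ε ≤ ε') : IsProductBounded μ B' ε' := fun T ↦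
  (measure_mono (Set.iInter₂_mono fun x _ ↦ hB' x)).trans ((hB T).trans (pow_le_pow_left' hε _))

lemma comp_injective (hB : IsProductBounded μ B ε) {f : V → X} (hf : Function.Injective f) :
    IsProductBounded μ (fun v ↦ B (f v)) ε := by
  classical
  intro T
  simpa [Finset.card_image_of_injective T hf] using hB (T.image f)

/-- A union bound over the choice, for every `v` in a finite set, of one of the candidate sets in
`C v`; candidates for different `v` are disjoint, so the bounds for them multiply. -/
lemma iUnion_iInter (hB : IsProductBounded μ B ε) (owner : X → V) (C : V → Finset (Finset X))
    {k M : ℕ} (card_eq : ∀ v, ∀ K ∈ C v, K.card = k)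
    (owner_eq : ∀ v, ∀ K ∈ C v, ∀ x ∈ K, owner x = v) (card_le : ∀ v, (C v).card ≤ M) :
    IsProductBounded μ (fun v ↦ ⋃ K ∈ C v, ⋂ x ∈ K, B x) (M * ε ^ k) := by
  classical
  intro T
  let choices : Finset (T → Finset X) := Fintype.piFinset fun v ↦ C v
  have cover : (⋂ v ∈ T, ⋃ K ∈ C v, ⋂ x ∈ K, B x) ⊆
      ⋃ c ∈ choices, ⋂ x ∈ Finset.univ.biUnion c, B x := by
    intro ω hω
    simp only [Set.mem_iInter, Set.mem_iUnion] at hω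
    choose c hc hcB using hω
    simp only [Set.mem_iUnion, Set.mem_iInter, Finset.mem_biUnion]
    refine ⟨fun v : T ↦ c v.1 v.2, Fintype.mem_piFinset.2 fun v : T ↦ hc v.1 v.2, ?_⟩
    rintro x ⟨v, -, hx⟩
    exact hcB v.1 v.2 x hx
  have card_biUnion : ∀ c ∈ choices, (Finset.univ.biUnion c).card = k * T.card := by
    intro c hc
    have hc := Fintype.mem_piFinset.1 hc
    rw [Finset.card_biUnion, Finset.sum_const_nat (m := k) fun (v : T) _ ↦ card_eq v.1 _ (hc v)]
    · rw [Finset.card_univ, Fintype.card_coe, mul_comm]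
    · refine fun v _ w _ hvw ↦ Finset.disjoint_left.2 fun x hxv hxw ↦ hvw (Subtype.ext ?_)
      rw [← owner_eq v _ (hc v) x hxv, owner_eq w _ (hc w) x hxw]
  have card_choices : choices.card ≤ M ^ T.card := by
    simpa [choices] using Finset.prod_le_pow_card Finset.univ (fun v : T ↦ (C v).card) M
      fun v _ ↦ card_le v
  calc μ (⋂ v ∈ T, ⋃ K ∈ C v, ⋂ x ∈ K, B x)
      ≤ ∑ c ∈ choices, μ (⋂ x ∈ Finset.univ.biUnion c, B x) :=
        (measure_mono cover).trans (measure_biUnion_finset_le _ _)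
    _ ≤ ∑ _c ∈ choices, ε ^ (k * T.card) :=
        Finset.sum_le_sum fun c hc ↦ card_biUnion c hc ▸ hB _
    _ = choices.card * ε ^ (k * T.card) := by rw [Finset.sum_const, nsmul_eq_mul]
    _ ≤ M ^ T.card * ε ^ (k * T.card) := by gcongr; exact_mod_cast card_choices
    _ = (M * ε ^ k) ^ T.card := by rw [mul_pow, pow_mul]

lemma of_subtype {P : X → Prop} {B : Subtype P → Set Ω} (hB : IsProductBounded μ B ε) :
    IsProductBounded μ (fun x ↦ {ω | ∃ h : P x, ω ∈ B ⟨x, h⟩}) ε := by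
  classical
  intro T
  by_cases hT : ∀ x ∈ T, P x
  · have card_subtype : (T.subtype P).card = T.card := by
      rw [Finset.card_subtype, Finset.filter_true_of_mem hT]
    refine (measure_mono fun ω hω ↦ ?_).trans (card_subtype ▸ hB (T.subtype P))
    simp only [Set.mem_iInter, Set.mem_ofPred_eq] at hω
    simp only [Set.mem_iInter, Finset.mem_subtype]
    exact fun x hx ↦ (hω x hx).2
  · push Not at hT
    obtain ⟨x, hx, hPx⟩ := hT
    refine (measure_mono_null (fun ω hω ↦ ?_) measure_empty).trans_le bot_le
    exact hPx (Set.mem_iInter₂.1 hω x hx).1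

end IsProductBounded

end ProductBounded

section Blocks

open SimpleGraph

lemma reachable_of_forall_adj_succ {V : Type*} {H : SimpleGraph V} {f : ℕ → V} {m n : ℕ}
    (h : ∀ i ∈ Set.Ico (m ⊓ n) (m ⊔ n), H.Adj (f i) (f (i + 1))) : H.Reachable (f m) (f n) := by
  rw [reachable_iff_reflTransGen]
  refine (reflTransGen_of_succ (fun i j ↦ H.Adj (f i) (f j)) (fun i hi ↦ ?_) fun i hi ↦ ?_).lift f
    fun _ _ hij ↦ hij
  · exact h i ⟨inf_le_left.trans hi.1, hi.2.trans_le le_sup_right⟩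
  · exact (h i ⟨inf_le_right.trans hi.1, hi.2.trans_le le_sup_left⟩).symm

/-- The graph on `ℕ × ℕ` joining the nearest neighbours that both lie in `s`. -/
def gridOn (s : Set (ℕ × ℕ)) : SimpleGraph (ℕ × ℕ) where
  Adj v w := (hasse (ℕ × ℕ)).Adj v w ∧ v ∈ s ∧ w ∈ s
  symm := ⟨fun _ _ h ↦ ⟨h.1.symm, h.2.2, h.2.1⟩⟩
  loopless := ⟨fun _ h ↦ h.1.ne rfl⟩

/-- The `3 × 3` block containing `v`, as a point of the coarser grid whose points are the blocks. -/
def block (v : ℕ × ℕ) : ℕ × ℕ := (v.1 / 3, v.2 / 3)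

/-- The blocks that are good for `s`: those with at most one point outside `s`. -/
def goodBlocks (s : Set (ℕ × ℕ)) : Set (ℕ × ℕ) :=
  {v | {w | block w = v ∧ w ∉ s}.Subsingleton}

/-- The `y`-th row of the grid crosses the block `v`, inside `s`. -/
def FullRow (s : Set (ℕ × ℕ)) (v : ℕ × ℕ) (y : ℕ) : Prop :=
  y / 3 = v.2 ∧ ∀ x, x / 3 = v.1 → (x, y) ∈ s

/-- The `x`-th column of the grid crosses the block `v`, inside `s`. -/
def FullColumn (s : Set (ℕ × ℕ)) (v : ℕ × ℕ) (x : ℕ) : Prop :=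
  x / 3 = v.1 ∧ ∀ y, y / 3 = v.2 → (x, y) ∈ s

variable {s : Set (ℕ × ℕ)} {v w a b : ℕ × ℕ} {x x' y y' n : ℕ}

lemma gridOn_adj_right (h : (x, y) ∈ s) (h' : (x + 1, y) ∈ s) :
    (gridOn s).Adj (x, y) (x + 1, y) :=
  ⟨Or.inl <| Prod.mk_covBy_mk_iff.2 <| Or.inl ⟨Order.covBy_add_one x, rfl⟩, h, h'⟩

lemma gridOn_adj_up (h : (x, y) ∈ s) (h' : (x, y + 1) ∈ s) :
    (gridOn s).Adj (x, y) (x, y + 1) :=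
  ⟨Or.inl <| Prod.mk_covBy_mk_iff.2 <| Or.inr ⟨Order.covBy_add_one y, rfl⟩, h, h'⟩

lemma eq_right_or_eq_up_of_covBy (h : v ⋖ w) : w = (v.1 + 1, v.2) ∨ w = (v.1, v.2 + 1) :=
  (Prod.covBy_iff.1 h).imp
    (fun h ↦ Prod.ext (Order.covBy_iff_add_one_eq.1 h.1).symm h.2.symm)
    fun h ↦ Prod.ext h.2.symm (Order.covBy_iff_add_one_eq.1 h.1).symm

lemma div_eq_of_mem_uIcc {m i j k q : ℕ} (hi : i / m = q) (hj : j / m = q)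
    (hk : k ∈ Set.uIcc i j) : k / m = q := by
  wlog hij : i ≤ j generalizing i j
  · exact this hj hi (Set.uIcc_comm i j ▸ hk) (le_of_not_ge hij)
  rw [Set.uIcc_of_le hij] at hk
  exact le_antisymm (hj ▸ Nat.div_le_div_right hk.2) (hi ▸ Nat.div_le_div_right hk.1)

lemma FullRow.reachable (h : FullRow s v y) (hx : x / 3 = v.1) (hx' : x' / 3 = v.1) :
    (gridOn s).Reachable (x, y) (x', y) :=
  reachable_of_forall_adj_succ (f := fun i ↦ (i, y)) fun _i hi ↦
    gridOn_adj_right (h.2 _ (div_eq_of_mem_uIcc hx hx' ⟨hi.1, hi.2.le⟩))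
      (h.2 _ (div_eq_of_mem_uIcc hx hx' ⟨hi.1.trans (Nat.le_succ _), hi.2⟩))

lemma FullColumn.reachable (h : FullColumn s v x) (hy : y / 3 = v.2) (hy' : y' / 3 = v.2) :
    (gridOn s).Reachable (x, y) (x, y') :=
  reachable_of_forall_adj_succ (f := fun j ↦ (x, j)) fun _j hj ↦
    gridOn_adj_up (h.2 _ (div_eq_of_mem_uIcc hy hy' ⟨hj.1, hj.2.le⟩))
      (h.2 _ (div_eq_of_mem_uIcc hy hy' ⟨hj.1.trans (Nat.le_succ _), hj.2⟩))

lemma block_mk (hx : x / 3 = v.1) (hy : y / 3 = v.2) : block (x, y) = v :=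
  Prod.ext hx hy

lemma eq_and_eq_of_mem_goodBlocks (hv : v ∈ goodBlocks s) (hx : x / 3 = v.1) (hy : y / 3 = v.2)
    (h : (x, y) ∉ s) (hx' : x' / 3 = v.1) (hy' : y' / 3 = v.2) (h' : (x', y') ∉ s) :
    x = x' ∧ y = y' :=
  Prod.mk.inj (hv ⟨block_mk hx hy, h⟩ ⟨block_mk hx' hy', h'⟩)

lemma exists_fullRow (hv : v ∈ goodBlocks s) : ∃ y, FullRow s v y := by
  by_contra! h
  simp only [FullRow, not_and, not_forall] at h
  have hy : 3 * v.2 / 3 = v.2 := by omega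
  have hy' : (3 * v.2 + 1) / 3 = v.2 := by omega
  obtain ⟨x, hx, hxs⟩ := h _ hy
  obtain ⟨x', hx', hxs'⟩ := h _ hy'
  have := (eq_and_eq_of_mem_goodBlocks hv hx hy hxs hx' hy' hxs').2
  omega

lemma exists_fullColumn (hv : v ∈ goodBlocks s) : ∃ x, FullColumn s v x := by
  by_contra! h
  simp only [FullColumn, not_and, not_forall] at h
  have hx : 3 * v.1 / 3 = v.1 := by omega
  have hx' : (3 * v.1 + 1) / 3 = v.1 := by omega
  obtain ⟨y, hy, hys⟩ := h _ hx
  obtain ⟨y', hy', hys'⟩ := h _ hx'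
  have := (eq_and_eq_of_mem_goodBlocks hv hx hy hys hx' hy' hys').1
  omega

lemma fullRow_or_fullColumn (hv : v ∈ goodBlocks s) (h : (x, y) ∈ s) (hx : x / 3 = v.1)
    (hy : y / 3 = v.2) : FullRow s v y ∨ FullColumn s v x := by
  by_contra! hxy
  simp only [FullRow, FullColumn, hx, hy, true_and, not_forall] at hxy
  obtain ⟨⟨x', hx', hs⟩, y', hy', hs'⟩ := hxy
  obtain ⟨rfl, -⟩ := eq_and_eq_of_mem_goodBlocks hv hx' hy hs hx hy' hs'
  exact hs h

lemma reachable_of_block_eq (hv : v ∈ goodBlocks s) (ha : a ∈ s) (hb : b ∈ s)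
    (hav : block a = v) (hbv : block b = v) : (gridOn s).Reachable a b := by
  obtain ⟨r, hr⟩ := exists_fullRow hv
  obtain ⟨c, hc⟩ := exists_fullColumn hv
  have reachable_crossing {a : ℕ × ℕ} (ha : a ∈ s) (hav : block a = v) :
      (gridOn s).Reachable a (c, r) := by
    have hx : a.1 / 3 = v.1 := congrArg Prod.fst hav
    have hy : a.2 / 3 = v.2 := congrArg Prod.snd hav
    rcases fullRow_or_fullColumn hv ha hx hy with hrow | hcol
    · exact (hrow.reachable hx hc.1).trans (hc.reachable hy hr.1)
    · exact (hcol.reachable hy hr.1).trans (hr.reachable hx hc.1)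
  exact (reachable_crossing ha hav).trans (reachable_crossing hb hbv).symm

lemma exists_div_three_eq_of_subsingleton {P Q : ℕ → Prop} {j : ℕ}
    (hP : {y | y / 3 = j ∧ ¬P y}.Subsingleton) (hQ : {y | y / 3 = j ∧ ¬Q y}.Subsingleton) :
    ∃ y, y / 3 = j ∧ P y ∧ Q y := by
  classical
  by_contra! h
  let fibre := Finset.Icc (3 * j) (3 * j + 2)
  have div_eq {y : ℕ} (hy : y ∈ fibre) : y / 3 = j := by
    have := Finset.mem_Icc.1 hy
    omega
  have card_fibre : fibre.card = 3 := by rw [Nat.card_Icc]; omega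
  have card_le_one {R : ℕ → Prop} (hR : {y | y / 3 = j ∧ ¬R y}.Subsingleton) :
      (fibre.filter fun y ↦ ¬R y).card ≤ 1 := by
    refine Finset.card_le_one.2 fun y hy y' hy' ↦ ?_
    rw [Finset.mem_filter] at hy hy'
    exact hR ⟨div_eq hy.1, hy.2⟩ ⟨div_eq hy'.1, hy'.2⟩
  have cover : fibre ⊆ fibre.filter (fun y ↦ ¬P y) ∪ fibre.filter fun y ↦ ¬Q y := by
    intro y hy
    rw [← Finset.filter_or, Finset.mem_filter]
    exact ⟨hy, not_and_or.1 fun hPQ ↦ h y (div_eq hy) hPQ.1 hPQ.2⟩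
  have := (Finset.card_le_card cover).trans (Finset.card_union_le _ _)
  have := card_le_one hP
  have := card_le_one hQ
  omega

lemma exists_gridOn_adj_right {i j : ℕ} (h : (i, j) ∈ goodBlocks s)
    (h' : (i + 1, j) ∈ goodBlocks s) :
    ∃ a b, block a = (i, j) ∧ block b = (i + 1, j) ∧ (gridOn s).Adj a b := by
  have hx : (3 * i + 2) / 3 = i := by omega
  have hx' : (3 * i + 2 + 1) / 3 = i + 1 := by omega
  obtain ⟨y, hy, hs, hs'⟩ := exists_div_three_eq_of_subsingleton (j := j)
    (P := fun y ↦ (3 * i + 2, y) ∈ s) (Q := fun y ↦ (3 * i + 2 + 1, y) ∈ s)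
    (fun _ hy _ hz ↦ (eq_and_eq_of_mem_goodBlocks h hx hy.1 hy.2 hx hz.1 hz.2).2)
    (fun _ hy _ hz ↦ (eq_and_eq_of_mem_goodBlocks h' hx' hy.1 hy.2 hx' hz.1 hz.2).2)
  exact ⟨_, _, block_mk hx hy, block_mk hx' hy, gridOn_adj_right hs hs'⟩

lemma exists_gridOn_adj_up {i j : ℕ} (h : (i, j) ∈ goodBlocks s)
    (h' : (i, j + 1) ∈ goodBlocks s) :
    ∃ a b, block a = (i, j) ∧ block b = (i, j + 1) ∧ (gridOn s).Adj a b := by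
  have hy : (3 * j + 2) / 3 = j := by omega
  have hy' : (3 * j + 2 + 1) / 3 = j + 1 := by omega
  obtain ⟨x, hx, hs, hs'⟩ := exists_div_three_eq_of_subsingleton (j := i)
    (P := fun x ↦ (x, 3 * j + 2) ∈ s) (Q := fun x ↦ (x, 3 * j + 2 + 1) ∈ s)
    (fun _ hx _ hz ↦ (eq_and_eq_of_mem_goodBlocks h hx.1 hy hx.2 hz.1 hy hz.2).1)
    (fun _ hx _ hz ↦ (eq_and_eq_of_mem_goodBlocks h' hx.1 hy' hx.2 hz.1 hy' hz.2).1)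
  exact ⟨_, _, block_mk hx hy, block_mk hx hy', gridOn_adj_up hs hs'⟩

lemma exists_gridOn_adj_of_covBy (hv : v ∈ goodBlocks s) (hw : w ∈ goodBlocks s) (h : v ⋖ w) :
    ∃ a b, block a = v ∧ block b = w ∧ (gridOn s).Adj a b := by
  obtain rfl | rfl := eq_right_or_eq_up_of_covBy h
  · exact exists_gridOn_adj_right hv hw
  · exact exists_gridOn_adj_up hv hw

lemma exists_gridOn_adj_of_gridOn_goodBlocks_adj (h : (gridOn (goodBlocks s)).Adj v w) :
    ∃ a b, block a = v ∧ block b = w ∧ (gridOn s).Adj a b := by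
  obtain ⟨hvw | hwv, hv, hw⟩ := h
  · exact exists_gridOn_adj_of_covBy hv hw hvw
  · obtain ⟨b, a, hb, ha, hba⟩ := exists_gridOn_adj_of_covBy hw hv hwv
    exact ⟨a, b, ha, hb, hba.symm⟩

lemma reachable_of_reachable_block (ha : a ∈ s) (hb : b ∈ s) (hblock : block a ∈ goodBlocks s)
    (h : (gridOn (goodBlocks s)).Reachable (block a) (block b)) : (gridOn s).Reachable a b := by
  obtain ⟨walk⟩ := h
  generalize hv : block a = v at walk hblock
  generalize hw : block b = w at walk
  induction walk generalizing a with
  | nil => exact reachable_of_block_eq hblock ha hb hv hw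
  | cons hadj _ ih =>
    obtain ⟨a', b', ha', hb', hab⟩ := exists_gridOn_adj_of_gridOn_goodBlocks_adj hadj
    exact (reachable_of_block_eq hblock ha hab.2.1 hv ha').trans
      (hab.reachable.trans (ih hab.2.2 hb' hadj.2.2 hw))

/-- The points of `s` all of whose blocks at the scales `3, 3 ^ 2, …, 3 ^ n` are good, a block at
scale `3 ^ (k + 1)` being good if at most one of its blocks at scale `3 ^ k` is not. -/
def core (s : Set (ℕ × ℕ)) (n : ℕ) : Set (ℕ × ℕ) :=
  {v | ∀ k ≤ n, block^[k] v ∈ goodBlocks^[k] s}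

lemma exists_mem_core (hv : v ∈ goodBlocks^[n] s) : ∃ a ∈ core s n, block^[n] a = v := by
  induction n generalizing v with
  | zero => exact ⟨v, fun k hk ↦ by rwa [Nat.le_zero.1 hk], rfl⟩
  | succ n ih =>
    have hv' : v ∈ goodBlocks (goodBlocks^[n] s) := by
      rwa [Function.iterate_succ_apply'] at hv
    obtain ⟨y, hy, hrow⟩ := exists_fullRow hv'
    have hx : 3 * v.1 / 3 = v.1 := by omega
    obtain ⟨a, ha, hblock⟩ := ih (hrow _ hx)
    have hblock_succ : block^[n + 1] a = v := by
      rw [Function.iterate_succ_apply', hblock, block_mk hx hy]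
    refine ⟨a, fun k hk ↦ ?_, hblock_succ⟩
    rcases Nat.le_succ_iff.1 hk with hk | rfl
    · exact ha k hk
    · rwa [hblock_succ]

lemma reachable_of_reachable_iterate_block (ha : a ∈ core s n) (hb : b ∈ core s n)
    (h : (gridOn (goodBlocks^[n] s)).Reachable (block^[n] a) (block^[n] b)) :
    (gridOn s).Reachable a b := by
  induction n with
  | zero => exact h
  | succ n ih =>
    have ha_succ := ha _ le_rfl
    simp only [Function.iterate_succ_apply'] at ha_succ h
    exact ih (fun k hk ↦ ha k (hk.trans n.le_succ)) (fun k hk ↦ hb k (hk.trans n.le_succ))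
      (reachable_of_reachable_block (ha n n.le_succ) (hb n n.le_succ) ha_succ h)

lemma fst_iterate_block (n : ℕ) (v : ℕ × ℕ) : (block^[n] v).1 = v.1 / 3 ^ n := by
  induction n with
  | zero => simp
  | succ n ih => rw [Function.iterate_succ_apply', block, ih, Nat.div_div_eq_div_mul, pow_succ]

lemma exists_reachable_pow_le (h : ∀ n, (0, 0) ∈ goodBlocks^[n] s) (n : ℕ) :
    ∃ a, (gridOn s).Reachable (0, 0) a ∧ 3 ^ n ≤ a.1 := by
  have block_zero (k : ℕ) : block^[k] (0, 0) = (0, 0) := Function.iterate_fixed rfl k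
  have zero_good : (0, 0) ∈ goodBlocks (goodBlocks^[n] s) :=
    Function.iterate_succ_apply' goodBlocks n s ▸ h (n + 1)
  obtain ⟨y, hy, hrow⟩ := exists_fullRow zero_good
  have one_good : (1, y) ∈ goodBlocks^[n] s := hrow 1 rfl
  obtain ⟨a, ha, hblock⟩ := exists_mem_core one_good
  have zero_mem_core : (0, 0) ∈ core s n := fun k _ ↦ (block_zero k).symm ▸ h k
  refine ⟨a, reachable_of_reachable_iterate_block zero_mem_core ha ?_, ?_⟩
  · rw [hblock, block_zero]
    exact reachable_of_block_eq zero_good (h n) one_good rfl (block_mk rfl hy)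
  · have : a.1 / 3 ^ n = 1 := by rw [← fst_iterate_block, hblock]
    exact (Nat.one_le_div_iff (by positivity)).1 this.ge

lemma infinite_reachable_of_forall_mem_iterate_goodBlocks (h : ∀ n, (0, 0) ∈ goodBlocks^[n] s) :
    {a | (gridOn s).Reachable (0, 0) a}.Infinite := by
  refine Set.Infinite.of_image Prod.fst (Set.infinite_of_forall_exists_gt fun n ↦ ?_)
  obtain ⟨a, ha, hn⟩ := exists_reachable_pow_le h n
  exact ⟨a.1, Set.mem_image_of_mem _ ha, (Nat.lt_pow_self (by norm_num)).trans_le hn⟩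

end Blocks

section BadBlocks

/-- The nine points of the block `v`. -/
def blockPoints (v : ℕ × ℕ) : Finset (ℕ × ℕ) :=
  Finset.Icc (3 * v.1, 3 * v.2) (3 * v.1 + 2, 3 * v.2 + 2)

lemma mem_blockPoints {v w : ℕ × ℕ} : w ∈ blockPoints v ↔ block w = v := by
  simp only [blockPoints, block, Finset.mem_Icc, Prod.le_def, Prod.ext_iff]
  omega

lemma card_blockPoints (v : ℕ × ℕ) : (blockPoints v).card = 9 := by
  simp only [blockPoints, Finset.card_Icc_prod, Nat.card_Icc, add_assoc, Nat.add_sub_cancel_left,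
    Nat.reduceAdd, Nat.reduceMul]

variable {Ω : Type*} [MeasurableSpace Ω] {μ : Measure Ω} {S : Ω → Set (ℕ × ℕ)} {ε : ℝ≥0∞}

namespace IsProductBounded

lemma notMem_goodBlocks (h : IsProductBounded μ (fun v ↦ {ω | v ∉ S ω}) ε) :
    IsProductBounded μ (fun v ↦ {ω | v ∉ goodBlocks (S ω)}) (36 * ε ^ 2) := by
  let pairs (v : ℕ × ℕ) : Finset (Finset (ℕ × ℕ)) := (blockPoints v).powersetCard 2
  have owner_eq (v : ℕ × ℕ) (K) (hK : K ∈ pairs v) (w) (hw : w ∈ K) : block w = v :=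
    mem_blockPoints.1 ((Finset.mem_powersetCard.1 hK).1 hw)
  have card_pairs (v : ℕ × ℕ) : (pairs v).card ≤ 36 := by
    rw [Finset.card_powersetCard, card_blockPoints]
    decide
  refine (h.iUnion_iInter block pairs (fun v K hK ↦ (Finset.mem_powersetCard.1 hK).2) owner_eq
    card_pairs).mono (fun v ω hω ↦ ?_) le_rfl
  obtain ⟨a, ⟨hav, has⟩, b, ⟨hbv, hbs⟩, hab⟩ := Set.not_subsingleton_iff.1 hω
  have mem_pairs : {a, b} ∈ pairs v := by
    rw [Finset.mem_powersetCard, Finset.insert_subset_iff, Finset.singleton_subset_iff]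
    exact ⟨⟨mem_blockPoints.2 hav, mem_blockPoints.2 hbv⟩, Finset.card_pair hab⟩
  simp only [Set.mem_iUnion, Set.mem_iInter]
  exact ⟨{a, b}, mem_pairs, by simp [has, hbs]⟩

lemma notMem_iterate_goodBlocks (h : IsProductBounded μ (fun v ↦ {ω | v ∉ S ω}) ε)
    (hε : 72 * ε ≤ 1) (n : ℕ) :
    IsProductBounded μ (fun v ↦ {ω | v ∉ goodBlocks^[n] (S ω)}) (2⁻¹ ^ n * ε) := by
  induction n with
  | zero => simpa using h
  | succ n ih =>
    simp only [Function.iterate_succ_apply']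
    refine ih.notMem_goodBlocks.mono (fun _ ↦ subset_rfl) ?_
    have hε' : 36 * ε ≤ 2⁻¹ := by
      rw [ENNReal.le_inv_iff_mul_le]
      exact hε.trans_eq' (by ring)
    calc 36 * (2⁻¹ ^ n * ε) ^ 2 = 36 * ε * (2⁻¹ ^ n * 2⁻¹ ^ n) * ε := by ring
      _ ≤ 2⁻¹ * (1 * 2⁻¹ ^ n) * ε := by
        gcongr
        exact pow_le_one' (ENNReal.inv_le_one.2 one_le_two) n
      _ = 2⁻¹ ^ (n + 1) * ε := by ring

lemma measure_exists_notMem_iterate_goodBlocks_le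
    (h : IsProductBounded μ (fun v ↦ {ω | v ∉ S ω}) ε) (hε : 72 * ε ≤ 1) (v : ℕ × ℕ) :
    μ {ω | ∃ n, v ∉ goodBlocks^[n] (S ω)} ≤ 2 * ε :=
  calc μ {ω | ∃ n, v ∉ goodBlocks^[n] (S ω)}
      = μ (⋃ n, {ω | v ∉ goodBlocks^[n] (S ω)}) := by rw [Set.ofPred_exists]
    _ ≤ ∑' n, μ {ω | v ∉ goodBlocks^[n] (S ω)} := measure_iUnion_le _
    _ ≤ ∑' n, 2⁻¹ ^ n * ε :=
      ENNReal.tsum_le_tsum fun n ↦ (h.notMem_iterate_goodBlocks hε n).measure_le v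
    _ = 2 * ε := by rw [ENNReal.tsum_mul_right, ENNReal.tsum_geometric_two]

end IsProductBounded

end BadBlocks

section WalkCounting

variable {V : Type*} {H : SimpleGraph V} {N : V → Finset V} {x y : V}

lemma finite_setOf_walk_length_lt (hN : ∀ u v, H.Adj u v → v ∈ N u) (n : ℕ) (x : V) :
    {y | ∃ w : H.Walk x y, w.length < n}.Finite := by
  induction n generalizing x with
  | zero => simp
  | succ n ih =>
    refine (((N x).finite_toSet.biUnion fun z _ ↦ ih z).insert x).subset ?_
    rintro y ⟨_ | ⟨h, w⟩, hw⟩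
    · exact Set.mem_insert _ _
    · exact Or.inr (Set.mem_biUnion (hN _ _ h) ⟨w, Nat.succ_lt_succ_iff.1 hw⟩)

lemma exists_isPath_length_eq (hN : ∀ u v, H.Adj u v → v ∈ N u)
    (hx : {y | H.Reachable x y}.Infinite) (n : ℕ) :
    ∃ (y : V) (w : H.Walk x y), w.IsPath ∧ w.length = n := by
  obtain ⟨y, hxy, hy⟩ := hx.exists_notMem_finite (finite_setOf_walk_length_lt hN n x)
  obtain ⟨w, hw⟩ := hxy.exists_isPath
  have length_ge : n ≤ w.length := not_lt.1 fun h ↦ hy ⟨w, h⟩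
  exact ⟨_, w.take n, hw.take n, by rw [SimpleGraph.Walk.take_length, inf_eq_left.2 length_ge]⟩

section DecidableEq

variable [DecidableEq V]

/-- The edge sets of the walks of length `n` that start at `x` and move from each vertex `z` to a
member of `N z`. -/
def walkEdgeSets (N : V → Finset V) : ℕ → V → Finset (Finset (Sym2 V))
  | 0, _ => {∅}
  | n + 1, x => (N x).biUnion fun y ↦ (walkEdgeSets N n y).image (insert s(x, y))

lemma card_walkEdgeSets_le {D : ℕ} (hN : ∀ z, (N z).card ≤ D) (n : ℕ) (x : V) :
    (walkEdgeSets N n x).card ≤ D ^ n := by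
  induction n generalizing x with
  | zero => simp [walkEdgeSets]
  | succ n ih =>
    calc (walkEdgeSets N (n + 1) x).card
        ≤ (N x).card * D ^ n :=
          Finset.card_biUnion_le_card_mul _ _ _ fun y _ ↦ Finset.card_image_le.trans (ih y)
      _ ≤ D * D ^ n := by gcongr; exact hN x
      _ = D ^ (n + 1) := (pow_succ' D n).symm

lemma edges_toFinset_mem_walkEdgeSets (hN : ∀ u v, H.Adj u v → v ∈ N u) (w : H.Walk x y) :
    w.edges.toFinset ∈ walkEdgeSets N w.length x := by
  induction w with
  | nil => simp [walkEdgeSets]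
  | cons h w ih =>
    rw [SimpleGraph.Walk.edges_cons, List.toFinset_cons]
    exact Finset.mem_biUnion.2 ⟨_, hN _ _ h, Finset.mem_image_of_mem _ ih⟩

lemma exists_mem_walkEdgeSets_card_eq (hN : ∀ u v, H.Adj u v → v ∈ N u)
    (hx : {y | H.Reachable x y}.Infinite) (n : ℕ) :
    ∃ K ∈ walkEdgeSets N n x, K.card = n ∧ ∀ e ∈ K, e ∈ H.edgeSet := by
  obtain ⟨y, w, hw, rfl⟩ := exists_isPath_length_eq hN hx n
  refine ⟨w.edges.toFinset, edges_toFinset_mem_walkEdgeSets hN w, ?_, fun e he ↦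
    w.edges_subset_edgeSet (List.mem_toFinset.1 he)⟩
  rw [List.toFinset_card_of_nodup hw.isTrail.edges_nodup, w.length_edges]

end DecidableEq

lemma measure_infinite_reachable_le {Ω : Type*} [MeasurableSpace Ω] {μ : Measure Ω} {ε : ℝ≥0∞}
    {G : Ω → SimpleGraph V} {D : ℕ}
    (h : IsProductBounded μ (fun e ↦ {ω | e ∈ (G ω).edgeSet}) ε)
    (hN : ∀ ω u v, (G ω).Adj u v → v ∈ N u) (card_le : ∀ z, (N z).card ≤ D) (x : V) (n : ℕ) :
    μ {ω | {y | (G ω).Reachable x y}.Infinite} ≤ (D * ε) ^ n := by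
  classical
  let candidates := (walkEdgeSets N n x).filter fun K ↦ K.card = n
  have card_candidates : candidates.card ≤ D ^ n :=
    (Finset.card_filter_le _ _).trans (card_walkEdgeSets_le card_le n x)
  have bounded := h.iUnion_iInter (fun _ ↦ ()) (fun _ ↦ candidates)
    (fun _ _ hK ↦ (Finset.mem_filter.1 hK).2) (fun _ _ _ _ _ ↦ rfl) fun _ ↦ card_candidates
  have cover : {ω | {y | (G ω).Reachable x y}.Infinite} ⊆
      ⋃ K ∈ candidates, ⋂ e ∈ K, {ω | e ∈ (G ω).edgeSet} := by
    intro ω hω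
    obtain ⟨K, hK, hcard, hopen⟩ := exists_mem_walkEdgeSets_card_eq (hN ω) hω n
    simp only [Set.mem_iUnion, Set.mem_iInter]
    exact ⟨K, Finset.mem_filter.2 ⟨hK, hcard⟩, hopen⟩
  rw [mul_pow, ← Nat.cast_pow]
  exact (measure_mono cover).trans (bounded.measure_le ())

end WalkCounting

section Percolation

variable {d : ℕ} {p : ℝ} {μ : Measure (Config d)} {ω : Config d} {i j : Fin d}

lemma adj_symm {x y : Vertex d} (h : adj x y) : adj y x := by
  rw [adj, ← h]
  exact Finset.sum_congr rfl fun i _ ↦ by omega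

lemma adj_iff_exists_eq_add_single {x y : Vertex d} :
    adj x y ↔ ∃ c : Fin d × ℤˣ, y = x + Pi.single c.1 (c.2 : ℤ) := by
  constructor
  · intro h
    rw [adj] at h
    obtain ⟨i, -, hi⟩ := Finset.exists_ne_zero_of_sum_ne_zero (h.trans_ne one_ne_zero)
    rw [← Finset.add_sum_erase _ _ (Finset.mem_univ i)] at h
    have rest : ∑ k ∈ Finset.univ.erase i, (x k - y k).natAbs = 0 := by omega
    obtain ⟨u, hu⟩ : IsUnit (y i - x i) := Int.isUnit_iff_natAbs_eq.2 (by omega)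
    refine ⟨(i, u), funext fun k ↦ ?_⟩
    rcases eq_or_ne k i with rfl | hk
    · simp [hu]
    · have hxy := Finset.sum_eq_zero_iff.1 rest k (Finset.mem_erase.2 ⟨hk, Finset.mem_univ k⟩)
      simpa [hk] using (sub_eq_zero.1 (Int.natAbs_eq_zero.1 hxy)).symm
  · rintro ⟨⟨i, u⟩, rfl⟩
    rw [adj, Finset.sum_eq_single_of_mem i (Finset.mem_univ i) fun k _ hk ↦ by simp [hk]]
    simp

/-- The graph of open edges of the configuration `ω`. -/
def openGraph (ω : Config d) : SimpleGraph (Vertex d) where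
  Adj := step ω
  symm := ⟨fun _ _ ⟨h, hω⟩ ↦ ⟨adj_symm h, by simpa only [Sym2.eq_swap] using hω⟩⟩
  loopless := ⟨fun x ⟨h, _⟩ ↦ by simp [adj] at h⟩

lemma cluster_eq_setOf_reachable (ω : Config d) (x : Vertex d) :
    cluster ω x = {y | (openGraph ω).Reachable x y} :=
  Set.ext fun y ↦ (SimpleGraph.reachable_iff_reflTransGen (G := openGraph ω) x y).symm

lemma IsBernoulli.isProductBounded (h : IsBernoulli d p μ) (hp : p ∈ Set.Icc 0 1) (b : Bool) :
    IsProductBounded μ (fun e ↦ {ω | ω e = b}) (ENNReal.ofReal (if b then p else 1 - p)) := by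
  intro T
  have nonneg : 0 ≤ if b then p else 1 - p := by
    cases b
    · exact sub_nonneg.2 hp.2
    · exact hp.1
  have cylinder : ⋂ e ∈ T, {ω : Config d | ω e = b} = {ω | ∀ e ∈ T, ω e = b} := by
    ext ω
    simp only [Set.mem_iInter, Set.mem_ofPred_eq]
  rw [cylinder, h.2 T fun _ ↦ b, Finset.prod_const, ENNReal.ofReal_pow nonneg]

/-- The right (`false`) and upper (`true`) neighbours of `v`. -/
def rightOrUp (v : ℕ × ℕ) : Bool → ℕ × ℕ
  | false => (v.1 + 1, v.2)
  | true => (v.1, v.2 + 1)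

/-- The embedding of the quadrant `ℕ × ℕ` into the `(i, j)` coordinate plane of `ℤ^d`. -/
def quadrant (i j : Fin d) (v : ℕ × ℕ) : Vertex d :=
  Pi.single i (v.1 : ℤ) + Pi.single j (v.2 : ℤ)

lemma quadrant_zero (i j : Fin d) : quadrant i j (0, 0) = origin d := by
  simp [quadrant, origin, funext_iff]

lemma quadrant_injective (hij : i ≠ j) : Function.Injective (quadrant i j) := by
  intro v w h
  have hi := congrFun h i
  have hj := congrFun h j
  simp only [quadrant, Pi.add_apply, Pi.single_eq_same, Pi.single_eq_of_ne hij,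
    Pi.single_eq_of_ne hij.symm, add_zero, zero_add, Nat.cast_inj] at hi hj
  exact Prod.ext hi hj

lemma adj_quadrant_rightOrUp (i j : Fin d) (v : ℕ × ℕ) (b : Bool) :
    adj (quadrant i j v) (quadrant i j (rightOrUp v b)) := by
  refine adj_iff_exists_eq_add_single.2 ⟨(cond b j i, 1), ?_⟩
  cases b
  · simp [quadrant, rightOrUp, Pi.single_add, add_right_comm]
  · simp [quadrant, rightOrUp, Pi.single_add, add_assoc]

/-- The edge of `ℤ^d` leading from the point `e.1` of the quadrant in the direction `e.2`. -/
def quadrantEdge (i j : Fin d) (e : (ℕ × ℕ) × Bool) : Edge d :=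
  ⟨s(quadrant i j e.1, quadrant i j (rightOrUp e.1 e.2)), _, _,
    adj_quadrant_rightOrUp i j e.1 e.2, rfl⟩

lemma quadrantEdge_injective (hij : i ≠ j) : Function.Injective (quadrantEdge i j) := by
  rintro ⟨⟨x, y⟩, b⟩ ⟨⟨x', y'⟩, b'⟩ h
  have h := congrArg Subtype.val h
  simp only [quadrantEdge, Sym2.eq_iff, (quadrant_injective hij).eq_iff] at h
  cases b <;> cases b' <;> simp only [rightOrUp, Prod.mk.injEq] at h ⊢ <;> grind

/-- The points of the quadrant whose edges to the right and upwards are both open. -/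
def openSites (i j : Fin d) (ω : Config d) : Set (ℕ × ℕ) :=
  {v | ∀ b, ω (quadrantEdge i j (v, b)) = true}

lemma openGraph_adj_of_gridOn_openSites_adj {v w : ℕ × ℕ}
    (h : (gridOn (openSites i j ω)).Adj v w) :
    (openGraph ω).Adj (quadrant i j v) (quadrant i j w) := by
  wlog hvw : v ⋖ w generalizing v w
  · exact (this h.symm (h.1.resolve_left hvw)).symm
  obtain rfl | rfl := eq_right_or_eq_up_of_covBy hvw
  · exact ⟨adj_quadrant_rightOrUp i j v false, h.2.1 false⟩
  · exact ⟨adj_quadrant_rightOrUp i j v true, h.2.1 true⟩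

lemma mem_zeroToInfinity_of_forall_mem_iterate_goodBlocks (hij : i ≠ j)
    (h : ∀ n, (0, 0) ∈ goodBlocks^[n] (openSites i j ω)) : ω ∈ ZeroToInfinity d := by
  let embedding : gridOn (openSites i j ω) →g openGraph ω :=
    ⟨quadrant i j, openGraph_adj_of_gridOn_openSites_adj⟩
  have infinite_image := (infinite_reachable_of_forall_mem_iterate_goodBlocks h).image
    (quadrant_injective hij).injOn
  refine infinite_image.mono ?_
  rintro _ ⟨v, hv, rfl⟩
  rw [cluster_eq_setOf_reachable, ← quadrant_zero i j]
  exact hv.map embedding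

lemma IsBernoulli.isProductBounded_notMem_openSites (h : IsBernoulli d p μ) (hp : p ∈ Set.Icc 0 1)
    (hij : i ≠ j) :
    IsProductBounded μ (fun v ↦ {ω | v ∉ openSites i j ω}) (2 * ENNReal.ofReal (1 - p)) := by
  have closed_edges := (h.isProductBounded hp false).comp_injective (quadrantEdge_injective hij)
  refine (closed_edges.iUnion_iInter Prod.fst (fun v ↦ {{(v, false)}, {(v, true)}})
    (k := 1) (M := 2) (by simp) (by simp) fun _ ↦ Finset.card_le_two).mono
    (fun v ω hω ↦ ?_) (by simp)
  obtain ⟨b, hb⟩ := not_forall.1 hω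
  simp only [Set.mem_iUnion, Set.mem_iInter]
  refine ⟨{(v, b)}, by cases b <;> simp, by simpa using hb⟩

lemma IsBernoulli.measure_zeroToInfinity_ne_zero (h : IsBernoulli d p μ) (hd : 2 ≤ d)
    (hp : p ∈ Set.Icc (143 / 144) 1) : μ (ZeroToInfinity d) ≠ 0 := by
  have := h.1
  have := Fin.nontrivial_iff_two_le.2 hd
  obtain ⟨i, j, hij⟩ := exists_pair_ne (Fin d)
  have bounded := h.isProductBounded_notMem_openSites ⟨by linarith [hp.1], hp.2⟩ hij
  have small : 72 * (2 * ENNReal.ofReal (1 - p)) ≤ 1 :=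
    calc 72 * (2 * ENNReal.ofReal (1 - p)) = ENNReal.ofReal (144 * (1 - p)) := by
          rw [ENNReal.ofReal_mul (by norm_num), ENNReal.ofReal_ofNat, ← mul_assoc]
          norm_num
      _ ≤ 1 := ENNReal.ofReal_le_one.2 (by linarith [hp.1])
  intro null
  have cover : Set.univ ⊆ ZeroToInfinity d ∪ {ω | ∃ n, (0, 0) ∉ goodBlocks^[n] (openSites i j ω)} :=
    fun ω _ ↦ or_iff_not_imp_right.2 fun h ↦
      mem_zeroToInfinity_of_forall_mem_iterate_goodBlocks hij (not_exists_not.1 h)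
  have one_le : 1 ≤ 2 * (2 * ENNReal.ofReal (1 - p)) :=
    calc 1 = μ Set.univ := measure_univ.symm
      _ ≤ μ (ZeroToInfinity d) + μ {ω | ∃ n, (0, 0) ∉ goodBlocks^[n] (openSites i j ω)} :=
        (measure_mono cover).trans (measure_union_le _ _)
      _ ≤ 2 * (2 * ENNReal.ofReal (1 - p)) := by
        rw [null, zero_add]
        exact bounded.measure_exists_notMem_iterate_goodBlocks_le small (0, 0)
  have : (36 : ℝ≥0∞) ≤ 1 :=
    calc 36 = 36 * 1 := (mul_one _).symm
      _ ≤ 36 * (2 * (2 * ENNReal.ofReal (1 - p))) := by gcongr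
      _ = 72 * (2 * ENNReal.ofReal (1 - p)) := by ring
      _ ≤ 1 := small
  norm_num at this

/-- The nearest neighbours of `x` in `ℤ^d`. -/
def neighbors (x : Vertex d) : Finset (Vertex d) :=
  Finset.univ.image fun c : Fin d × ℤˣ ↦ x + Pi.single c.1 (c.2 : ℤ)

lemma card_neighbors_le (x : Vertex d) : (neighbors x).card ≤ 2 * d :=
  Finset.card_image_le.trans_eq (by simp [mul_comm])

lemma mem_neighbors_of_adj {x y : Vertex d} (h : adj x y) : y ∈ neighbors x := by
  obtain ⟨c, rfl⟩ := adj_iff_exists_eq_add_single.1 h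
  exact Finset.mem_image_of_mem _ (Finset.mem_univ c)

lemma exists_of_mem_edgeSet_openGraph {e : Sym2 (Vertex d)}
    (he : e ∈ (openGraph ω).edgeSet) : ∃ h : IsEdge e, ω ⟨e, h⟩ = true := by
  induction e with | _ x y
  obtain ⟨h, hω⟩ := he
  exact ⟨⟨x, y, h, rfl⟩, hω⟩

lemma IsBernoulli.isProductBounded_edgeSet_openGraph (h : IsBernoulli d p μ)
    (hp : p ∈ Set.Icc 0 1) :
    IsProductBounded μ (fun e ↦ {ω | e ∈ (openGraph ω).edgeSet}) (ENNReal.ofReal p) :=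
  (h.isProductBounded hp true).of_subtype.mono (fun _ _ ↦ exists_of_mem_edgeSet_openGraph) le_rfl

lemma IsBernoulli.measure_zeroToInfinity_eq_zero (h : IsBernoulli d p μ) (hp : p ∈ Set.Icc 0 1)
    (hdp : 2 * d * p < 1) : μ (ZeroToInfinity d) = 0 := by
  have bound (n : ℕ) : μ (ZeroToInfinity d) ≤ ((2 * d : ℕ) * ENNReal.ofReal p) ^ n := by
    simp only [ZeroToInfinity, cluster_eq_setOf_reachable]
    exact measure_infinite_reachable_le (h.isProductBounded_edgeSet_openGraph hp)
      (fun _ _ _ hadj ↦ mem_neighbors_of_adj hadj.1) card_neighbors_le (origin d) n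
  have ratio_lt_one : ((2 * d : ℕ) * ENNReal.ofReal p) < 1 := by
    rw [← ENNReal.ofReal_natCast, ← ENNReal.ofReal_mul (Nat.cast_nonneg _), ENNReal.ofReal_lt_one]
    push_cast
    exact hdp
  exact nonpos_iff_eq_zero.1 <|
    ge_of_tendsto' (ENNReal.tendsto_pow_atTop_nhds_zero_of_lt_one ratio_lt_one) bound

end Percolation

/-- For every `d ≥ 2`, the critical point `p_c(ℤ^d) = sup {p ∈ (0,1) : θ(p) = 0}` of Bernoulli
bond percolation on `ℤ^d` satisfies `0 < p_c < 1`. -/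
theorem pc_nontrivial
    (d : ℕ) (hd : 2 ≤ d)
    (μ : ℝ → Measure (Config d))
    (hμ : ∀ p ∈ Set.Ioo (0 : ℝ) 1, IsBernoulli d p (μ p)) :
    0 < sSup {p : ℝ | p ∈ Set.Ioo (0 : ℝ) 1 ∧ μ p (ZeroToInfinity d) = 0} ∧
      sSup {p : ℝ | p ∈ Set.Ioo (0 : ℝ) 1 ∧ μ p (ZeroToInfinity d) = 0} < 1 := by
  set subcritical := {p : ℝ | p ∈ Set.Ioo (0 : ℝ) 1 ∧ μ p (ZeroToInfinity d) = 0}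
  have hd' : (2 : ℝ) ≤ d := by exact_mod_cast hd
  have mem_subcritical : 1 / (4 * d : ℝ) ∈ subcritical := by
    have hp : 1 / (4 * d : ℝ) ∈ Set.Ioo 0 1 :=
      ⟨by positivity, (div_lt_one (by positivity)).2 (by linarith)⟩
    refine ⟨hp, (hμ _ hp).measure_zeroToInfinity_eq_zero (Set.Ioo_subset_Icc_self hp) ?_⟩
    field_simp
    norm_num
  have le_of_mem : ∀ p ∈ subcritical, p ≤ 143 / 144 := fun p ⟨hp, null⟩ ↦ by
    by_contra! h
    exact (hμ p hp).measure_zeroToInfinity_ne_zero hd ⟨h.le, hp.2.le⟩ null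
  constructor
  · exact mem_subcritical.1.1.trans_le (le_csSup ⟨_, le_of_mem⟩ mem_subcritical)
  · exact (csSup_le ⟨_, mem_subcritical⟩ le_of_mem).trans_lt (by norm_num)

end Perc
end

section
/- Sharpness of the phase transition (Duminil-Copin–Tassion): for every dimension d ≥ 2 and every p ∈ (0,1) with p < p_c(ℤ^d), there exists a constant c = c(p) > 0 such that ℙ_p[0 ↔ ∂Λ_n] ≤ exp(−c·n) for all integers n ≥ 1. -/
open MeasureTheory

namespace Perc

/-!
The proof follows Duminil-Copin and Tassion. For a finite set `S` containing the origin, let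
`φ_p(S)` be the expected number of open edges of the boundary `ΔS` whose inner endpoint is connected
to the origin inside `S`.

If `φ_p(S) < 1` for some `S ⊆ Λ_m`, then, given the cluster of the origin inside `S`, a path from
the origin out of `Λ_{n+m+1}` has to use a boundary edge of `S` and then leave a translate of `Λ_n`
without returning to that cluster. Hence `ℙ_p[0 ↔ Λ_{n+m+1}ᶜ] ≤ φ_p(S) ℙ_p[0 ↔ Λ_nᶜ]`, and iterating
gives exponential decay.

Otherwise, by monotonicity, `φ_r(S) ≥ 1` for all `S ∋ 0` and all `r ≥ p`. Condition on the set `S`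
of vertices of `Λ_n` that are not connected to `Λ_nᶜ`: the edges within `S` stay i.i.d., and if
`0 ∈ S`, every edge of `ΔS` connected to the origin inside `S` is pivotal for `0 ↔ Λ_nᶜ`. Russo's
formula turns this into `f' ≥ 1 - f` for `f(r) = ℙ_r[0 ↔ Λ_nᶜ]`, so that `f(q) ≥ 1 - exp(p - q)` for
every `n`, and `θ(q) > 0` for all `q > p`.
-/

open ProbabilityTheory Filter Topology

section InfiniteProduct

variable {ι : Type*} {X : ι → Type*} {A B : Set (∀ i, X i)} {F G : Finset ι}

theorem dependsOn_mem_of_imp {s : Set ι}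
    (h : ∀ ω ω' : ∀ i, X i, (∀ i ∈ s, ω i = ω' i) → ω ∈ A → ω' ∈ A) : DependsOn (· ∈ A) s :=
  fun ω ω' hω => propext ⟨h ω ω' hω, h ω' ω fun i hi => (hω i hi).symm⟩

theorem dependsOn_mem_inter {s t : Set ι} (hA : DependsOn (· ∈ A) s) (hB : DependsOn (· ∈ B) t) :
    DependsOn (· ∈ A ∩ B) (s ∪ t) := fun _ _ h =>
  congrArg₂ And (hA fun i hi => h i (.inl hi)) (hB fun i hi => h i (.inr hi))

theorem exists_eq_preimage_restrict_of_dependsOn (hA : DependsOn (· ∈ A) (F : Set ι)) :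
    ∃ T, A = F.restrict ⁻¹' T := by
  obtain ⟨g, hg⟩ := dependsOn_iff_exists_comp.1 hA
  exact ⟨{x | g x}, Set.ext fun ω => iff_of_eq (congrFun hg ω)⟩

variable [∀ i, MeasurableSpace (X i)] [∀ i, MeasurableSingletonClass (X i)]
  [∀ i, Countable (X i)]

theorem measurableSet_of_dependsOn (hA : DependsOn (· ∈ A) (F : Set ι)) : MeasurableSet A := by
  obtain ⟨T, rfl⟩ := exists_eq_preimage_restrict_of_dependsOn hA
  exact F.measurable_restrict T.to_countable.measurableSet

variable {μ : ∀ i, Measure (X i)} [∀ i, IsProbabilityMeasure (μ i)]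

theorem infinitePi_real_inter_of_dependsOn (hA : DependsOn (· ∈ A) (F : Set ι))
    (hB : DependsOn (· ∈ B) (G : Set ι)) (hFG : Disjoint F G) :
    (Measure.infinitePi μ).real (A ∩ B) =
      (Measure.infinitePi μ).real A * (Measure.infinitePi μ).real B := by
  obtain ⟨S, rfl⟩ := exists_eq_preimage_restrict_of_dependsOn hA
  obtain ⟨T, rfl⟩ := exists_eq_preimage_restrict_of_dependsOn hB
  have hindep : IndepFun F.restrict G.restrict (Measure.infinitePi μ) :=
    (iIndepFun_infinitePi (X := fun _ x => x) fun _ => measurable_id).indepFun_finset F G hFG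
      measurable_pi_apply
  simp only [measureReal_def, hindep.measure_inter_preimage_eq_mul S T
    S.to_countable.measurableSet T.to_countable.measurableSet, ENNReal.toReal_mul]

theorem eq_infinitePi_of_forall_pi_singleton {ν : Measure (∀ i, X i)}
    (hν : ∀ (s : Finset ι) (f : ∀ i, X i),
      ν (Set.pi s fun i => {f i}) = ∏ i ∈ s, μ i {f i}) :
    ν = Measure.infinitePi μ := by
  refine IsProjectiveLimit.unique (fun s => ?_) (Measure.isProjectiveLimit_infinitePi μ)
  have (i : ι) : Nonempty (X i) := nonempty_of_isProbabilityMeasure (μ i)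
  refine Measure.ext_of_singleton fun x => ?_
  obtain ⟨f, rfl⟩ := Subtype.exists_pi_extension x
  have hpre : s.restrict ⁻¹' {fun i : s => f i} = Set.pi s fun i => {f i} := by
    ext ω
    simp [funext_iff]
  calc ν.map s.restrict {fun i : s => f i}
      = ∏ i ∈ s, μ i {f i} := by
        rw [Measure.map_apply s.measurable_restrict (measurableSet_singleton _), hpre, hν]
    _ = Measure.pi (fun i : s => μ i) {fun i : s => f i} := by
        rw [Measure.pi_singleton, Finset.prod_coe_sort s fun i => μ i {f i}]

end InfiniteProduct

theorem sum_measureReal_preimage_singleton_inter_le {α β : Type*} [MeasurableSpace α]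
    {μ : Measure α} [IsFiniteMeasure μ] {f : α → β} {s : Finset β} {A : Set α}
    (hf : ∀ b ∈ s, MeasurableSet (f ⁻¹' {b})) :
    ∑ b ∈ s, μ.real (f ⁻¹' {b} ∩ A) ≤ μ.real A := by
  calc ∑ b ∈ s, μ.real (f ⁻¹' {b} ∩ A)
      = ∑ b ∈ s, (μ.restrict A).real (f ⁻¹' {b}) :=
        Finset.sum_congr rfl fun b hb => (measureReal_restrict_apply (hf b hb)).symm
    _ = (μ.restrict A).real (f ⁻¹' s) := sum_measureReal_preimage_singleton s hf
    _ ≤ (μ.restrict A).real Set.univ := measureReal_mono (Set.subset_univ _)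
    _ = μ.real A := measureReal_restrict_apply_univ A

theorem one_sub_exp_le_of_one_sub_le_deriv {f f' : ℝ → ℝ} {a b : ℝ} (hab : a ≤ b)
    (hf : ∀ x ∈ Set.Icc a b, HasDerivAt f (f' x) x) (hf' : ∀ x ∈ Set.Icc a b, 1 - f x ≤ f' x)
    (ha : 0 ≤ f a) : 1 - Real.exp (a - b) ≤ f b := by
  have hderiv (x : ℝ) (hx : x ∈ Set.Icc a b) : HasDerivAt (fun x => 1 - f x) (-f' x) x :=
    (hf x hx).const_sub 1
  have hgronwall := le_gronwallBound_of_liminf_deriv_right_le (δ := 1) (K := -1) (ε := 0)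
    (fun x hx => (hderiv x hx).continuousAt.continuousWithinAt)
    (fun x hx r hr =>
      (hderiv x (Set.Ico_subset_Icc_self hx)).hasDerivWithinAt.liminf_right_slope_le hr)
    (by linarith) (fun x hx => by linarith [hf' x (Set.Ico_subset_Icc_self hx)])
    b (Set.right_mem_Icc.2 hab)
  rw [gronwallBound_ε0, one_mul, neg_one_mul, neg_sub] at hgronwall
  linarith

theorem exists_forall_le_exp_of_le_mul {a : ℕ → ℝ} {r : ℝ} {L : ℕ} (ha : Antitone a)
    (hnonneg : ∀ n, 0 ≤ a n) (ha0 : a 0 < 1) (hr : r < 1) (hL : 0 < L)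
    (hrec : ∀ n, a (n + L) ≤ r * a n) :
    ∃ c > 0, ∀ n : ℕ, a n ≤ Real.exp (-c * (n + 1 : ℕ)) := by
  obtain ⟨ρ, hρ, hρ_lt⟩ := exists_between (max_lt hr ha0)
  obtain ⟨hrρ, ha0ρ⟩ := max_lt_iff.1 hρ
  have hρ_pos : 0 < ρ := (hnonneg 0).trans_lt ha0ρ
  obtain ⟨c, hc⟩ : ∃ c, c = -Real.log ρ / L := ⟨_, rfl⟩
  have hc_pos : 0 < c := hc ▸ div_pos (neg_pos.2 (Real.log_neg hρ_pos hρ_lt)) (Nat.cast_pos.2 hL)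
  have hρ_exp : ρ = Real.exp (-c * L) := by
    rw [hc, neg_div, neg_neg, div_mul_cancel₀ _ (Nat.cast_ne_zero.2 hL.ne'), Real.exp_log hρ_pos]
  refine ⟨c, hc_pos, fun n => ?_⟩
  induction n using Nat.strong_induction_on with
  | _ n ih =>
    obtain hn | hn := lt_or_ge n L
    · calc a n ≤ ρ := (ha n.zero_le).trans ha0ρ.le
        _ ≤ Real.exp (-c * (n + 1 : ℕ)) := by
          rw [hρ_exp, Real.exp_le_exp]
          exact mul_le_mul_of_nonpos_left (by exact_mod_cast hn) (neg_nonpos.2 hc_pos.le)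
    · obtain ⟨k, rfl⟩ := Nat.exists_eq_add_of_le' hn
      calc a (k + L) ≤ r * a k := hrec k
        _ ≤ ρ * Real.exp (-c * (k + 1 : ℕ)) :=
          mul_le_mul hrρ.le (ih k (by omega)) (hnonneg k) hρ_pos.le
        _ = Real.exp (-c * (k + L + 1 : ℕ)) := by
          rw [hρ_exp, ← Real.exp_add]
          push_cast
          ring_nf

theorem exists_last_exit {α : Type*} {r : α → α → Prop} {K : Set α} {x z : α}
    (h : Relation.ReflTransGen r x z) (hx : x ∈ K) (hz : z ∉ K) :
    ∃ a ∈ K, ∃ b ∉ K, r a b ∧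
      Relation.ReflTransGen (fun u v => u ∈ Kᶜ ∧ v ∈ Kᶜ ∧ r u v) b z := by
  induction h with
  | refl => exact absurd hx hz
  | @tail w z _ hwz ih =>
    by_cases hw : w ∈ K
    · exact ⟨w, hw, z, hz, hwz, .refl⟩
    · obtain ⟨a, ha, b, hb, hab, hbw⟩ := ih hw
      exact ⟨a, ha, b, hb, hab, hbw.tail ⟨hw, hz, hwz⟩⟩

section Bernoulli

variable {ι : Type*} {p q : ℝ} {A : Set (ι → Bool)} {F : Finset ι}

/-- The law of i.i.d. Bernoulli(`p`) variables indexed by `ι`. The parameter is clipped to `[0, 1]`,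
so that the probability of an event is a function of a real variable and can be differentiated. -/
noncomputable def productBernoulli (ι : Type*) (p : ℝ) : Measure (ι → Bool) :=
  Measure.infinitePi fun _ => bernoulliMeasure true false (Set.projIcc 0 1 zero_le_one p)

instance : IsProbabilityMeasure (productBernoulli ι p) :=
  inferInstanceAs (IsProbabilityMeasure (Measure.infinitePi _))

theorem productBernoulli_real_pi_singleton (hp : p ∈ Set.Icc (0 : ℝ) 1) (s : Finset ι)
    (f : ι → Bool) :
    (productBernoulli ι p).real (Set.pi s fun i => {f i}) =
      ∏ i ∈ s, if f i then p else 1 - p := by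
  have hcoord (b : Bool) :
      (bernoulliMeasure true false (Set.projIcc 0 1 zero_le_one p)).real {b} =
        if b then p else 1 - p := by
    rw [Set.projIcc_of_mem _ hp, bernoulliMeasure_real_apply _ (measurableSet_singleton b)]
    cases b <;> simp
  rw [measureReal_def, productBernoulli,
    Measure.infinitePi_pi _ fun i _ => measurableSet_singleton (f i), ENNReal.toReal_prod]
  simp only [← measureReal_def, hcoord]

theorem productBernoulli_real_apply_eq (hp : p ∈ Set.Icc (0 : ℝ) 1) (i : ι) (b : Bool) :
    (productBernoulli ι p).real {ω | ω i = b} = if b then p else 1 - p := by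
  have hpi : {ω : ι → Bool | ω i = b} = Set.pi ({i} : Finset ι) fun _ => {b} := by
    ext ω
    simp
  rw [hpi, productBernoulli_real_pi_singleton hp {i} fun _ => b, Finset.prod_singleton]

theorem productBernoulli_map_comp_of_injective {σ : ι → ι} (hσ : σ.Injective) :
    (productBernoulli ι p).map (· ∘ σ) = productBernoulli ι p :=
  Measure.map_infinitePi_infinitePi_of_inj hσ

section Pivotal

variable [DecidableEq ι]

theorem dependsOn_preimage_update (i : ι) (b : Bool) (hA : DependsOn (· ∈ A) (F : Set ι)) :
    DependsOn (· ∈ (Function.update · i b) ⁻¹' A) (F.erase i : Set ι) := by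
  refine fun ω ω' hω => hA fun j hj => ?_
  obtain rfl | hji := eq_or_ne j i
  · simp
  · simpa [hji] using hω j (Finset.mem_coe.2 (Finset.mem_erase.2 ⟨hji, hj⟩))

theorem productBernoulli_real_eq_conditioned (hp : p ∈ Set.Icc (0 : ℝ) 1)
    (hA : DependsOn (· ∈ A) (F : Set ι)) (i : ι) :
    (productBernoulli ι p).real A =
      p * (productBernoulli ι p).real ((Function.update · i true) ⁻¹' A) +
        (1 - p) * (productBernoulli ι p).real ((Function.update · i false) ⁻¹' A) := by
  have hcoord (b : Bool) : DependsOn (· ∈ {ω : ι → Bool | ω i = b}) (({i} : Finset ι) : Set ι) :=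
    fun ω ω' hω => by simp [hω i]
  have hpart (b : Bool) : (productBernoulli ι p).real (A ∩ {ω | ω i = b}) =
      (if b then p else 1 - p) *
        (productBernoulli ι p).real ((Function.update · i b) ⁻¹' A) := by
    have hinter : A ∩ {ω | ω i = b} = {ω | ω i = b} ∩ (Function.update · i b) ⁻¹' A := by
      ext ω
      suffices ω i = b → (ω ∈ A ↔ Function.update ω i b ∈ A) by simpa [and_comm] using this
      rintro rfl
      rw [Function.update_eq_self]
    rw [hinter, productBernoulli, infinitePi_real_inter_of_dependsOn (hcoord b)
      (dependsOn_preimage_update i b hA) (by simp), ← productBernoulli,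
      productBernoulli_real_apply_eq hp]
  have hcompl : A \ {ω | ω i = true} = A ∩ {ω | ω i = false} := by
    ext ω
    simp
  rw [← measureReal_inter_add_sdiff (s := A) (measurableSet_of_dependsOn (hcoord true)), hcompl,
    hpart, hpart]
  simp

/-- The event that `i` is pivotal for `A`; for increasing `A` this is the event that the state of
`i` decides whether `A` occurs. -/
def pivotal (i : ι) (A : Set (ι → Bool)) : Set (ι → Bool) :=
  {ω | Function.update ω i true ∈ A ∧ Function.update ω i false ∉ A}

theorem isUpperSet_preimage_update (hA : IsUpperSet A) (i : ι) (b : Bool) :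
    IsUpperSet ((Function.update · i b) ⁻¹' A) :=
  hA.preimage fun _ _ hω => update_le_update_iff.2 ⟨le_rfl, fun j _ => hω j⟩

theorem dependsOn_pivotal (hA : DependsOn (· ∈ A) (F : Set ι)) (i : ι) :
    DependsOn (· ∈ pivotal i A) (F.erase i : Set ι) := fun _ _ hω =>
  congrArg₂ (fun P Q => P ∧ ¬Q) (dependsOn_preimage_update i true hA hω)
    (dependsOn_preimage_update i false hA hω)

theorem pivotal_preimage_update {i j : ι} (hij : i ≠ j) (b : Bool) :
    pivotal j ((Function.update · i b) ⁻¹' A) = (Function.update · i b) ⁻¹' pivotal j A := by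
  ext ω
  simp only [pivotal, Set.mem_ofPred_eq, Set.mem_preimage, Function.update_comm hij]

theorem productBernoulli_real_pivotal (hA : IsUpperSet A) (hF : DependsOn (· ∈ A) (F : Set ι))
    (i : ι) :
    (productBernoulli ι p).real (pivotal i A) =
      (productBernoulli ι p).real ((Function.update · i true) ⁻¹' A) -
        (productBernoulli ι p).real ((Function.update · i false) ⁻¹' A) :=
  measureReal_sdiff (fun _ => hA (Function.update_mono (Bool.false_le true)))
    (measurableSet_of_dependsOn (dependsOn_preimage_update i false hF))

-- Russo's formula: condition on the coordinates of `F` one at a time.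
theorem hasDerivAt_productBernoulli_real (hp : p ∈ Set.Ioo (0 : ℝ) 1)
    (hA : IsUpperSet A) (hF : DependsOn (· ∈ A) (F : Set ι)) :
    HasDerivAt (fun q => (productBernoulli ι q).real A)
      (∑ i ∈ F, (productBernoulli ι p).real (pivotal i A)) p := by
  induction F using Finset.induction_on generalizing A with
  | empty =>
    obtain rfl | rfl : A = ∅ ∨ A = Set.univ := by
      by_cases hA : A.Nonempty
      · exact .inr (Set.eq_univ_of_forall fun ω =>
          (iff_of_eq (hF (by simp))).1 hA.some_mem)
      · exact .inl (Set.not_nonempty_iff_eq_empty.1 hA)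
    · simpa using hasDerivAt_const p (0 : ℝ)
    · simpa using hasDerivAt_const p (1 : ℝ)
  | insert i F hi ih =>
    set A' : Bool → Set (ι → Bool) := fun b => (Function.update · i b) ⁻¹' A with hA'
    have hsection (b : Bool) : HasDerivAt (fun q => (productBernoulli ι q).real (A' b))
        (∑ j ∈ F, (productBernoulli ι p).real (pivotal j (A' b))) p :=
      ih (isUpperSet_preimage_update hA i b)
        (Finset.erase_insert hi ▸ dependsOn_preimage_update i b hF)
    have hcond : (fun q => (productBernoulli ι q).real A) =ᶠ[𝓝 p] fun q =>
        q * (productBernoulli ι q).real (A' true) +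
          (1 - q) * (productBernoulli ι q).real (A' false) := by
      filter_upwards [Icc_mem_nhds hp.1 hp.2] with q hq
      exact productBernoulli_real_eq_conditioned hq hF i
    have hpivotal (j : ι) (hj : j ∈ F) : (productBernoulli ι p).real (pivotal j A) =
        p * (productBernoulli ι p).real (pivotal j (A' true)) +
          (1 - p) * (productBernoulli ι p).real (pivotal j (A' false)) := by
      have hij : i ≠ j := fun h => hi (h ▸ hj)
      simp only [hA', pivotal_preimage_update hij]
      exact productBernoulli_real_eq_conditioned (Set.Ioo_subset_Icc_self hp)
        (dependsOn_pivotal hF j) i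
    refine HasDerivAt.congr_of_eventuallyEq ?_ hcond
    convert ((hasDerivAt_id' p).fun_mul (hsection true)).fun_add
      (((hasDerivAt_id' p).const_sub 1).fun_mul (hsection false)) using 1
    rw [Finset.sum_insert hi, productBernoulli_real_pivotal hA hF i, Finset.sum_congr rfl hpivotal,
      Finset.sum_add_distrib, ← Finset.mul_sum, ← Finset.mul_sum]
    ring

end Pivotal

theorem productBernoulli_real_mono (hp : 0 < p) (hpq : p ≤ q) (hq : q < 1)
    (hA : IsUpperSet A) (hF : DependsOn (· ∈ A) (F : Set ι)) :
    (productBernoulli ι p).real A ≤ (productBernoulli ι q).real A := by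
  classical
  have hderiv (x : ℝ) (hx : x ∈ Set.Ioo (0 : ℝ) 1) :=
    hasDerivAt_productBernoulli_real hx hA hF
  have hmono : MonotoneOn (fun x => (productBernoulli ι x).real A) (Set.Ioo 0 1) := by
    refine monotoneOn_of_hasDerivWithinAt_nonneg (convex_Ioo 0 1)
      (fun x hx => (hderiv x hx).continuousAt.continuousWithinAt)
      (fun x hx => (hderiv x (interior_subset hx)).hasDerivWithinAt) fun x _ => ?_
    positivity
  exact hmono ⟨hp, hpq.trans_lt hq⟩ ⟨hp.trans_le hpq, hq⟩ hpq

end Bernoulli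

theorem IsBernoulli.eq_productBernoulli {d : ℕ} {p : ℝ} {ν : Measure (Config d)}
    (hν : IsBernoulli d p ν) (hp : p ∈ Set.Icc (0 : ℝ) 1) : ν = productBernoulli (Edge d) p := by
  refine eq_infinitePi_of_forall_pi_singleton fun s f => ?_
  rw [← Measure.infinitePi_pi _ fun i _ => measurableSet_singleton (f i), ← productBernoulli,
    ← ofReal_measureReal (μ := productBernoulli _ p), productBernoulli_real_pi_singleton hp]
  exact hν.2 s f

section Lattice

variable {d : ℕ} {x y : Vertex d} {S : Finset (Vertex d)}

theorem adj.symm (h : adj x y) : adj y x :=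
  (Finset.sum_congr rfl fun _ _ => by omega).trans h

theorem adj.abs_sub_le_one (h : adj x y) (i : Fin d) : |y i - x i| ≤ 1 := by
  have hi : (x i - y i).natAbs ≤ ∑ j, (x j - y j).natAbs :=
    Finset.single_le_sum_of_canonicallyOrdered (f := fun j => (x j - y j).natAbs)
      (Finset.mem_univ i)
  rw [show ∑ j, (x j - y j).natAbs = 1 from h] at hi
  rw [abs_le]
  omega

theorem adj.add_right (h : adj x y) (v : Vertex d) : adj (x + v) (y + v) := by
  simpa [adj] using h

/-- The edge of `ℤ^d` joining two adjacent vertices. -/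
def edge (h : adj x y) : Edge d := ⟨s(x, y), x, y, h, rfl⟩

theorem exists_eq_edge (e : Edge d) : ∃ (x y : Vertex d) (h : adj x y), e = edge h := by
  obtain ⟨_, x, y, h, rfl⟩ := e
  exact ⟨x, y, h, rfl⟩

theorem edge_symm (h : adj x y) : edge h.symm = edge h :=
  Subtype.ext Sym2.eq_swap

theorem exists_eq_edge_of_mem {e : Edge d} (hx : x ∈ e.1) :
    ∃ (y : Vertex d) (h : adj x y), e = edge h := by
  obtain ⟨a, b, h, rfl⟩ := exists_eq_edge e
  obtain rfl | rfl : x = a ∨ x = b := Sym2.mem_iff.1 hx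
  exacts [⟨b, h, rfl⟩, ⟨a, h.symm, (edge_symm h).symm⟩]

theorem finite_setOf_edge_mem (x : Vertex d) : {e : Edge d | x ∈ e.1}.Finite := by
  refine Set.Finite.of_finite_image (f := Subtype.val) ?_ Subtype.val_injective.injOn
  refine ((Set.finite_Icc (x - 1) (x + 1)).image (s(x, ·))).subset ?_
  rintro _ ⟨e, hx, rfl⟩
  obtain ⟨y, h, rfl⟩ := exists_eq_edge_of_mem hx
  have hy (i : Fin d) := abs_sub_le_iff.1 (h.abs_sub_le_one i)
  exact ⟨y, ⟨fun i => sub_le_comm.1 (hy i).2, fun i => sub_le_iff_le_add'.1 (hy i).1⟩, rfl⟩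

theorem finite_setOf_edge_touching (S : Finset (Vertex d)) :
    {e : Edge d | ∃ x ∈ S, x ∈ e.1}.Finite := by
  have := S.finite_toSet.biUnion fun x _ => finite_setOf_edge_mem x
  exact this.subset fun e ⟨x, hx, hxe⟩ => Set.mem_biUnion hx hxe

/-- The finite set of edges with at least one endpoint in `S`. -/
noncomputable def edgesTouching (S : Finset (Vertex d)) : Finset (Edge d) :=
  (finite_setOf_edge_touching S).toFinset

open Classical in
/-- The finite set of edges with both endpoints in `S`. -/
noncomputable def edgesWithin (S : Finset (Vertex d)) : Finset (Edge d) :=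
  {e ∈ edgesTouching S | ∀ x ∈ e.1, x ∈ S}

/-- The edge boundary `ΔS`: the edges with exactly one endpoint in `S`. -/
noncomputable def edgeBoundary (S : Finset (Vertex d)) : Finset (Edge d) :=
  edgesTouching S \ edgesWithin S

theorem edge_mem_edgesTouching (h : adj x y) : edge h ∈ edgesTouching S ↔ x ∈ S ∨ y ∈ S := by
  simp [edgesTouching, edge, and_or_left, exists_or]

theorem edge_mem_edgesWithin (h : adj x y) : edge h ∈ edgesWithin S ↔ x ∈ S ∧ y ∈ S := by
  have hends : (∀ v ∈ (edge h).1, v ∈ S) ↔ x ∈ S ∧ y ∈ S := by simp [edge]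
  simp only [edgesWithin, Finset.mem_filter, edge_mem_edgesTouching, hends]
  tauto

theorem edgesTouching_mono {S T : Finset (Vertex d)} (h : S ⊆ T) :
    edgesTouching S ⊆ edgesTouching T :=
  Set.Finite.toFinset_mono fun _ ⟨x, hx, hxe⟩ => ⟨x, h hx, hxe⟩

theorem exists_eq_edge_of_mem_edgeBoundary {e : Edge d} (he : e ∈ edgeBoundary S) :
    ∃ x ∈ S, ∃ y ∉ S, ∃ h : adj x y, e = edge h := by
  obtain ⟨x, y, h, rfl⟩ := exists_eq_edge e
  rw [edgeBoundary, Finset.mem_sdiff, edge_mem_edgesTouching, edge_mem_edgesWithin] at he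
  by_cases hx : x ∈ S
  · exact ⟨x, hx, y, fun hy => he.2 ⟨hx, hy⟩, h, rfl⟩
  · exact ⟨y, he.1.resolve_left hx, x, hx, h.symm, (edge_symm h).symm⟩

/-- Translation of the edges of `ℤ^d` by the vector `v`. -/
def edgeShift (v : Vertex d) (e : Edge d) : Edge d :=
  ⟨e.1.map (· + v), by
    obtain ⟨x, y, h, rfl⟩ := exists_eq_edge e
    exact ⟨x + v, y + v, h.add_right v, rfl⟩⟩

theorem edgeShift_injective (v : Vertex d) : (edgeShift v).Injective := fun _ _ h =>
  Subtype.ext (Sym2.map.injective (add_left_injective v) (congrArg Subtype.val h))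

end Lattice

section ExitEvents

variable {d : ℕ} {ω ω' : Config d} {K : Set (Vertex d)} {W W' : Finset (Vertex d)}
  {x y : Vertex d} {p : ℝ}

theorem step.mono (hω : ω ≤ ω') (h : step ω x y) : step ω' x y :=
  ⟨h.1, hω _ h.2⟩

/-- `x` and `y` are joined by a path of open edges all of whose vertices lie in `K`; the trivial
path from `x` to itself is allowed even if `x ∉ K`. -/
def ConnIn (ω : Config d) (K : Set (Vertex d)) : Vertex d → Vertex d → Prop :=
  Relation.ReflTransGen fun x y => x ∈ K ∧ y ∈ K ∧ step ω x y

theorem connIn_univ : ConnIn ω Set.univ x y ↔ Conn ω x y := by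
  simp [ConnIn, Conn]

theorem ConnIn.conn (h : ConnIn ω K x y) : Conn ω x y :=
  Relation.ReflTransGen.mono (fun _ _ hab => hab.2.2) _ _ h

theorem ConnIn.mono (hω : ω ≤ ω') (h : ConnIn ω K x y) : ConnIn ω' K x y :=
  Relation.ReflTransGen.mono (fun _ _ ⟨ha, hb, hab⟩ => ⟨ha, hb, hab.mono hω⟩) _ _ h

theorem dependsOn_connIn (S : Finset (Vertex d)) (x y : Vertex d) :
    DependsOn (fun ω : Config d => ConnIn ω S x y) (edgesWithin S : Set (Edge d)) := by
  refine dependsOn_mem_of_imp (A := {ω | ConnIn ω S x y}) fun ω ω' hω => ?_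
  refine Relation.ReflTransGen.mono (fun a b ⟨ha, hb, h, hab⟩ => ⟨ha, hb, h, ?_⟩) x y
  exact hω (edge h) ((edge_mem_edgesWithin h).2 ⟨ha, hb⟩) ▸ hab

/-- The event that a path of open edges inside `K` leads from `x` out of `W`. -/
def exitEventIn (K : Set (Vertex d)) (W : Finset (Vertex d)) (x : Vertex d) : Set (Config d) :=
  {ω | ∃ z ∉ W, ConnIn ω K x z}

/-- The event that a path of open edges leads from `x` out of `W`. -/
abbrev exitEvent (W : Finset (Vertex d)) (x : Vertex d) : Set (Config d) :=
  exitEventIn Set.univ W x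

theorem mem_exitEventIn_of_notMem (hx : x ∉ W) : ω ∈ exitEventIn K W x :=
  ⟨x, hx, .refl⟩

theorem mem_exitEventIn_of_connIn (h : ConnIn ω K x y) (hy : ω ∈ exitEventIn K W y) :
    ω ∈ exitEventIn K W x :=
  let ⟨z, hz, hyz⟩ := hy
  ⟨z, hz, h.trans hyz⟩

theorem mem_exitEvent_of_step (h : step ω x y) (hy : ω ∈ exitEvent W y) : ω ∈ exitEvent W x :=
  mem_exitEventIn_of_connIn (.single ⟨trivial, trivial, h⟩) hy

theorem exitEventIn_induction {P : Vertex d → Prop} (outside : ∀ x ∉ W, P x)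
    (step : ∀ x ∈ W, ∀ y, x ∈ K → y ∈ K → step ω x y → ω ∈ exitEventIn K W y → P y → P x)
    (hx : ω ∈ exitEventIn K W x) : P x := by
  obtain ⟨z, hz, hxz⟩ := hx
  induction hxz using Relation.ReflTransGen.head_induction_on with
  | refl => exact outside z hz
  | head hab hbz ih =>
    rename_i a b
    by_cases ha : a ∈ W
    · exact step a ha b hab.1 hab.2.1 hab.2.2 ⟨z, hz, hbz⟩ ih
    · exact outside a ha

theorem isUpperSet_exitEventIn (K : Set (Vertex d)) (W : Finset (Vertex d)) (x : Vertex d) :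
    IsUpperSet (exitEventIn K W x) :=
  fun _ _ hω ⟨z, hz, hxz⟩ => ⟨z, hz, hxz.mono hω⟩

theorem exitEventIn_subset_exitEvent (K : Set (Vertex d)) (W : Finset (Vertex d)) (x : Vertex d) :
    exitEventIn K W x ⊆ exitEvent W x :=
  fun _ ⟨z, hz, hxz⟩ => ⟨z, hz, connIn_univ.2 hxz.conn⟩

theorem exitEvent_antitone (hW : W ⊆ W') (x : Vertex d) : exitEvent W' x ⊆ exitEvent W x :=
  fun _ ⟨z, hz, hxz⟩ => ⟨z, fun h => hz (hW h), hxz⟩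

theorem dependsOn_exitEventIn (K : Set (Vertex d)) (W : Finset (Vertex d)) (x : Vertex d) :
    DependsOn (· ∈ exitEventIn K W x) {e | e ∈ edgesTouching W ∧ ∀ v ∈ e.1, v ∈ K} := by
  refine dependsOn_mem_of_imp fun ω ω' hω => exitEventIn_induction
    (fun a => mem_exitEventIn_of_notMem) fun a haW b ha hb hab _ =>
      mem_exitEventIn_of_connIn (.single ⟨ha, hb, hab.1, ?_⟩)
  refine (hω (edge hab.1) ⟨(edge_mem_edgesTouching hab.1).2 (.inl haW), ?_⟩).symm.trans hab.2
  simp [edge, ha, hb]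

theorem dependsOn_exitEvent (W : Finset (Vertex d)) (x : Vertex d) :
    DependsOn (· ∈ exitEvent W x) (edgesTouching W : Set (Edge d)) :=
  (dependsOn_exitEventIn Set.univ W x).mono fun _ => And.left

theorem measurableSet_exitEvent (W : Finset (Vertex d)) (x : Vertex d) :
    MeasurableSet (exitEvent W x) :=
  measurableSet_of_dependsOn (dependsOn_exitEvent W x)

theorem comp_edgeShift_mem_exitEvent {v : Vertex d} (hW : ∀ z ∈ W', z + v ∈ W)
    (hω : ω ∈ exitEvent W x) : ω ∘ edgeShift v ∈ exitEvent W' (x - v) := by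
  refine exitEventIn_induction (P := fun u => ω ∘ edgeShift v ∈ exitEvent W' (u - v))
    (fun a ha => ?_) (fun a _ b _ _ hab _ => ?_) hω
  · exact mem_exitEventIn_of_notMem fun h => ha (by simpa using hW _ h)
  · have hadj : adj (a - v) (b - v) := by simpa [sub_eq_add_neg] using hab.1.add_right (-v)
    refine mem_exitEvent_of_step ⟨hadj, ?_⟩
    have hshift : edgeShift v (edge hadj) = edge hab.1 := Subtype.ext (by simp [edgeShift, edge])
    exact (congrArg ω hshift).trans hab.2

theorem productBernoulli_real_exitEvent_le_translate {v : Vertex d} (hW : ∀ z ∈ W', z + v ∈ W)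
    (x : Vertex d) :
    (productBernoulli (Edge d) p).real (exitEvent W x) ≤
      (productBernoulli (Edge d) p).real (exitEvent W' (x - v)) := by
  conv_rhs => rw [← productBernoulli_map_comp_of_injective (edgeShift_injective v)]
  rw [map_measureReal_apply (by fun_prop) (measurableSet_exitEvent _ _)]
  exact measureReal_mono fun ω => comp_edgeShift_mem_exitEvent hW

theorem productBernoulli_real_exitEvent_lt_one (hp : p ∈ Set.Ico (0 : ℝ) 1) (hx : x ∈ W) :
    (productBernoulli (Edge d) p).real (exitEvent W x) < 1 := by
  set closed : Set (Config d) := Set.pi (edgesTouching W) fun _ => {false}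
  have hpos : 0 < (productBernoulli (Edge d) p).real closed := by
    rw [productBernoulli_real_pi_singleton (Set.Ico_subset_Icc_self hp) _ fun _ => false]
    simpa using pow_pos (sub_pos.2 hp.2) _
  have hdisj : exitEvent W x ⊆ closedᶜ := fun ω hω hclosed => by
    refine exitEventIn_induction (P := fun a => a ∉ W) (fun _ h => h)
      (fun a ha b _ _ hab _ _ => ?_) hω hx
    have hab_closed : ω (edge hab.1) = false :=
      hclosed _ ((edge_mem_edgesTouching hab.1).2 (.inl ha))
    exact absurd (hab_closed.symm.trans hab.2) Bool.false_ne_true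
  calc (productBernoulli (Edge d) p).real (exitEvent W x)
      ≤ (productBernoulli (Edge d) p).real closedᶜ := measureReal_mono hdisj
    _ = 1 - (productBernoulli (Edge d) p).real closed := probReal_compl_eq_one_sub <|
        .pi (edgesTouching W).countable_toSet fun _ _ => measurableSet_singleton _
    _ < 1 := sub_lt_self 1 hpos

end ExitEvents

section Phi

variable {d : ℕ} {p q : ℝ}

/-- The event that the origin is connected inside `S` to an endpoint in `S` of the edge `e`. -/
def innerReach (S : Finset (Vertex d)) (e : Edge d) : Set (Config d) :=
  {ω | ∃ x ∈ S, x ∈ e.1 ∧ ConnIn ω S (origin d) x}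

/-- The Duminil-Copin–Tassion functional
`φ_p(S) = p ∑_{xy ∈ ΔS, x ∈ S} ℙ_p[0 ↔ x inside S]`. -/
noncomputable def phi (p : ℝ) (S : Finset (Vertex d)) : ℝ :=
  p * ∑ e ∈ edgeBoundary S, (productBernoulli (Edge d) p).real (innerReach S e)

theorem isUpperSet_innerReach (S : Finset (Vertex d)) (e : Edge d) :
    IsUpperSet (innerReach S e) :=
  fun _ _ hω ⟨x, hxS, hxe, hx⟩ => ⟨x, hxS, hxe, hx.mono hω⟩

theorem dependsOn_innerReach (S : Finset (Vertex d)) (e : Edge d) :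
    DependsOn (· ∈ innerReach S e) (edgesWithin S : Set (Edge d)) :=
  dependsOn_mem_of_imp fun _ _ hω ⟨x, hxS, hxe, hx⟩ =>
    ⟨x, hxS, hxe, (iff_of_eq (dependsOn_connIn S (origin d) x hω)).1 hx⟩

theorem phi_mono (hp : 0 < p) (hpq : p ≤ q) (hq : q < 1) (S : Finset (Vertex d)) :
    phi p S ≤ phi q S := by
  refine mul_le_mul hpq (Finset.sum_le_sum fun e _ => ?_) (by positivity) (by linarith)
  exact productBernoulli_real_mono hp hpq hq (isUpperSet_innerReach S e) (dependsOn_innerReach S e)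

end Phi

section Decay

variable {d : ℕ} {ω : Config d} {C S W : Finset (Vertex d)} {x y : Vertex d} {p M : ℝ}

open Classical in
/-- The cluster of the origin for the open edges with both endpoints in `S`. -/
noncomputable def clusterIn (S : Finset (Vertex d)) (ω : Config d) : Finset (Vertex d) :=
  {x ∈ S | ConnIn ω S (origin d) x}

theorem mem_clusterIn : x ∈ clusterIn S ω ↔ x ∈ S ∧ ConnIn ω S (origin d) x := by
  simp [clusterIn]

theorem dependsOn_clusterIn_preimage (C S : Finset (Vertex d)) :
    DependsOn (· ∈ clusterIn S ⁻¹' {C})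
      (edgesWithin S ∩ edgesTouching C : Finset (Edge d)) := by
  refine dependsOn_mem_of_imp fun ω ω' hω hC => ?_
  subst hC
  have hagree {a b : Vertex d} (ha : a ∈ S) (hb : b ∈ S) (hab : adj a b)
      (h : ConnIn ω S (origin d) a) : ω (edge hab) = ω' (edge hab) :=
    hω _ (Finset.mem_coe.2 (Finset.mem_inter.2 ⟨(edge_mem_edgesWithin hab).2 ⟨ha, hb⟩,
      (edge_mem_edgesTouching hab).2 (.inl (mem_clusterIn.2 ⟨ha, h⟩))⟩))
  have hconn (x : Vertex d) : ConnIn ω' S (origin d) x ↔ ConnIn ω S (origin d) x := by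
    constructor <;> intro h
    · induction h with
      | refl => exact .refl
      | tail _ hab ih =>
        obtain ⟨ha, hb, hadj, hopen⟩ := hab
        exact ih.tail ⟨ha, hb, hadj, (hagree ha hb hadj ih).trans hopen⟩
    · induction h with
      | refl => exact .refl
      | tail h hab ih =>
        obtain ⟨ha, hb, hadj, hopen⟩ := hab
        exact ih.tail ⟨ha, hb, hadj, (hagree ha hb hadj h).symm.trans hopen⟩
  exact Finset.ext fun x => by simp only [mem_clusterIn, hconn]

/-- The event that the edge `e` of `ΔS` is the last one leaving the cluster of the origin inside `S`
on some open path from the origin out of `W`. -/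
def lastExitEvent (S W : Finset (Vertex d)) (e : Edge d) : Set (Config d) :=
  {ω | ω e = true ∧ ∃ a ∈ clusterIn S ω, ∃ b ∉ S, e.1 = s(a, b) ∧
    ω ∈ exitEventIn (clusterIn S ω : Set (Vertex d))ᶜ W b}

theorem exitEvent_subset_iUnion_lastExitEvent (h0 : origin d ∈ S) (hSW : S ⊆ W) :
    exitEvent W (origin d) ⊆ ⋃ e ∈ edgeBoundary S, lastExitEvent S W e := by
  rintro ω ⟨z, hzW, hz⟩
  have hzC : z ∉ clusterIn S ω := fun h => hzW (hSW (mem_clusterIn.1 h).1)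
  obtain ⟨a, ha, b, hb, ⟨hadj, hopen⟩, hbz⟩ :=
    exists_last_exit (K := clusterIn S ω) hz.conn (mem_clusterIn.2 ⟨h0, .refl⟩) hzC
  obtain ⟨haS, hconn⟩ := mem_clusterIn.1 ha
  have hbS : b ∉ S := fun hbS =>
    hb (mem_clusterIn.2 ⟨hbS, hconn.tail ⟨haS, hbS, hadj, hopen⟩⟩)
  have he : edge hadj ∈ edgeBoundary S := by
    simp [edgeBoundary, edge_mem_edgesTouching, edge_mem_edgesWithin, haS, hbS]
  exact Set.mem_biUnion he ⟨hopen, a, ha, b, hbS, rfl, z, hzW, hbz⟩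

theorem lastExitEvent_edge_subset (hy : y ∉ S) (h : adj x y) :
    lastExitEvent S W (edge h) ⊆ ⋃ C ∈ {C ∈ S.powerset | x ∈ C},
      clusterIn S ⁻¹' {C} ∩ ({ω | ω (edge h) = true} ∩ exitEventIn (C : Set (Vertex d))ᶜ W y) := by
  rintro ω ⟨hopen, a, ha, b, hb, hab, hexit⟩
  have haS : a ∈ S := (mem_clusterIn.1 ha).1
  obtain ⟨rfl, rfl⟩ | ⟨rfl, rfl⟩ := Sym2.eq_iff.1 (show s(x, y) = s(a, b) from hab)
  · refine Set.mem_biUnion (x := clusterIn S ω) ?_ ⟨rfl, hopen, hexit⟩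
    exact Finset.mem_filter.2 ⟨Finset.mem_powerset.2 fun _ hc => (mem_clusterIn.1 hc).1, ha⟩
  · exact absurd haS hy

-- The three events depend on disjoint sets of edges: those within `S` that touch `C`, the single
-- edge `xy`, and those that do not touch `C`.
theorem productBernoulli_real_clusterIn_inter_exitEventIn (hp : p ∈ Set.Icc (0 : ℝ) 1) (hx : x ∈ C)
    (hy : y ∉ S) (h : adj x y) :
    (productBernoulli (Edge d) p).real
        (clusterIn S ⁻¹' {C} ∩
          ({ω | ω (edge h) = true} ∩ exitEventIn (C : Set (Vertex d))ᶜ W y)) =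
      (productBernoulli (Edge d) p).real (clusterIn S ⁻¹' {C}) *
        (p * (productBernoulli (Edge d) p).real (exitEventIn (C : Set (Vertex d))ᶜ W y)) := by
  have hedge : DependsOn (· ∈ {ω : Config d | ω (edge h) = true})
      (({edge h} : Finset (Edge d)) : Set (Edge d)) := fun _ _ hω => by simp [hω (edge h)]
  have hexit : DependsOn (· ∈ exitEventIn (C : Set (Vertex d))ᶜ W y)
      (edgesTouching W \ edgesTouching C : Finset (Edge d)) := by
    refine (dependsOn_exitEventIn _ W y).mono fun e he => ?_
    obtain ⟨heW, heC⟩ := he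
    obtain ⟨a, b, hab, rfl⟩ := exists_eq_edge e
    have hends : a ∉ C ∧ b ∉ C := by simpa [edge] using heC
    simp [heW, edge_mem_edgesTouching, hends]
  have hboth : DependsOn
      (· ∈ {ω : Config d | ω (edge h) = true} ∩ exitEventIn (C : Set (Vertex d))ᶜ W y)
      ({edge h} ∪ edgesTouching W \ edgesTouching C : Finset (Edge d)) := by
    simpa using dependsOn_mem_inter hedge hexit
  have hdisj₁ : Disjoint {edge h} (edgesTouching W \ edgesTouching C) := by
    simp [edge_mem_edgesTouching, hx]
  have hdisj₂ : Disjoint (edgesWithin S ∩ edgesTouching C)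
      ({edge h} ∪ edgesTouching W \ edgesTouching C) := by
    refine Finset.disjoint_union_right.2 ⟨?_, ?_⟩
    · simp [edge_mem_edgesWithin, hy]
    · exact Finset.disjoint_sdiff.mono_left Finset.inter_subset_right
  rw [productBernoulli, infinitePi_real_inter_of_dependsOn (dependsOn_clusterIn_preimage C S) hboth
    hdisj₂, infinitePi_real_inter_of_dependsOn hedge hexit hdisj₁, ← productBernoulli,
    productBernoulli_real_apply_eq hp, if_pos rfl]

theorem productBernoulli_real_lastExitEvent_le (hp : p ∈ Set.Icc (0 : ℝ) 1)
    (hM : ∀ x ∈ S, ∀ y ∉ S, adj x y → (productBernoulli (Edge d) p).real (exitEvent W y) ≤ M)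
    {e : Edge d} (he : e ∈ edgeBoundary S) :
    (productBernoulli (Edge d) p).real (lastExitEvent S W e) ≤
      p * (productBernoulli (Edge d) p).real (innerReach S e) * M := by
  obtain ⟨x, hx, y, hy, h, rfl⟩ := exists_eq_edge_of_mem_edgeBoundary he
  set P := productBernoulli (Edge d) p
  have hM₀ : 0 ≤ M := measureReal_nonneg.trans (hM x hx y hy h)
  have hcluster {C : Finset (Vertex d)} (hC : x ∈ C) :
      clusterIn S ⁻¹' {C} ⊆ clusterIn S ⁻¹' {C} ∩ innerReach S (edge h) := fun ω hω =>
    ⟨hω, x, hx, Sym2.mem_mk_left x y, (mem_clusterIn.1 (hω.symm ▸ hC : x ∈ clusterIn S ω)).2⟩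
  calc P.real (lastExitEvent S W (edge h))
      ≤ ∑ C ∈ S.powerset with x ∈ C, P.real (clusterIn S ⁻¹' {C} ∩
          ({ω | ω (edge h) = true} ∩ exitEventIn (C : Set (Vertex d))ᶜ W y)) :=
        (measureReal_mono (lastExitEvent_edge_subset hy h) (measure_ne_top _ _)).trans
          (measureReal_biUnion_finset_le _ _)
    _ ≤ ∑ C ∈ S.powerset with x ∈ C,
          P.real (clusterIn S ⁻¹' {C} ∩ innerReach S (edge h)) * (p * M) := by
        refine Finset.sum_le_sum fun C hC => ?_
        have hxC : x ∈ C := (Finset.mem_filter.1 hC).2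
        rw [productBernoulli_real_clusterIn_inter_exitEventIn hp hxC hy h]
        have hexit : P.real (exitEventIn (C : Set (Vertex d))ᶜ W y) ≤ M :=
          (measureReal_mono (exitEventIn_subset_exitEvent _ W y)).trans (hM x hx y hy h)
        exact mul_le_mul (measureReal_mono (hcluster hxC)) (mul_le_mul_of_nonneg_left hexit hp.1)
          (mul_nonneg hp.1 measureReal_nonneg) measureReal_nonneg
    _ ≤ P.real (innerReach S (edge h)) * (p * M) := by
        rw [← Finset.sum_mul]
        have := hp.1
        gcongr
        exact sum_measureReal_preimage_singleton_inter_le fun C _ =>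
          measurableSet_of_dependsOn (dependsOn_clusterIn_preimage C S)
    _ = p * P.real (innerReach S (edge h)) * M := by ring

theorem productBernoulli_real_exitEvent_le_phi_mul (hp : p ∈ Set.Icc (0 : ℝ) 1)
    (h0 : origin d ∈ S) (hSW : S ⊆ W)
    (hM : ∀ x ∈ S, ∀ y ∉ S, adj x y → (productBernoulli (Edge d) p).real (exitEvent W y) ≤ M) :
    (productBernoulli (Edge d) p).real (exitEvent W (origin d)) ≤ phi p S * M := by
  calc (productBernoulli (Edge d) p).real (exitEvent W (origin d))
      ≤ ∑ e ∈ edgeBoundary S, (productBernoulli (Edge d) p).real (lastExitEvent S W e) :=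
        (measureReal_mono (exitEvent_subset_iUnion_lastExitEvent h0 hSW) (measure_ne_top _ _)).trans
          (measureReal_biUnion_finset_le _ _)
    _ ≤ ∑ e ∈ edgeBoundary S, p * (productBernoulli (Edge d) p).real (innerReach S e) * M :=
        Finset.sum_le_sum fun e he => productBernoulli_real_lastExitEvent_le hp hM he
    _ = phi p S * M := by rw [phi, Finset.mul_sum, Finset.sum_mul]

end Decay

section LowerBound

variable {d : ℕ} {ω : Config d} {S W : Finset (Vertex d)} {x : Vertex d} {p q : ℝ}

open Classical in
/-- The vertices of `W` that no open path connects to the complement of `W`. -/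
noncomputable def trapped (W : Finset (Vertex d)) (ω : Config d) : Finset (Vertex d) :=
  {x ∈ W | ω ∉ exitEvent W x}

theorem trapped_subset (W : Finset (Vertex d)) (ω : Config d) : trapped W ω ⊆ W := by
  simp [trapped]

theorem mem_trapped : x ∈ trapped W ω ↔ ω ∉ exitEvent W x := by
  simpa [trapped] using mt mem_exitEventIn_of_notMem

theorem dependsOn_trapped_preimage (S W : Finset (Vertex d)) :
    DependsOn (· ∈ trapped W ⁻¹' {S}) (edgesTouching W \ edgesWithin S : Finset (Edge d)) := by
  refine dependsOn_mem_of_imp fun ω ω' hω hS => ?_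
  subst hS
  -- The next vertex on an exit path is not trapped, so such a path avoids the edges within `S`.
  have hagree {a b : Vertex d} (ha : a ∈ W) (hab : adj a b) (hb : ω ∈ exitEvent W b) :
      ω (edge hab) = ω' (edge hab) := by
    refine hω _ (Finset.mem_coe.2 (Finset.mem_sdiff.2 ⟨?_, fun h => ?_⟩))
    · exact (edge_mem_edgesTouching hab).2 (.inl ha)
    · exact mem_trapped.1 ((edge_mem_edgesWithin hab).1 h).2 hb
  have hexit (x : Vertex d) : ω' ∈ exitEvent W x ↔ ω ∈ exitEvent W x := by
    constructor
    · exact exitEventIn_induction (fun a => mem_exitEventIn_of_notMem)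
        fun a ha b _ _ ⟨hadj, hopen⟩ _ hb =>
          mem_exitEvent_of_step ⟨hadj, (hagree ha hadj hb).trans hopen⟩ hb
    · exact exitEventIn_induction (fun a => mem_exitEventIn_of_notMem)
        fun a ha b _ _ ⟨hadj, hopen⟩ hb =>
          mem_exitEvent_of_step ⟨hadj, (hagree ha hadj hb).symm.trans hopen⟩
  exact Finset.ext fun x => by simp only [mem_trapped, hexit]

theorem trapped_preimage_inter_innerReach_subset_pivotal (h0 : origin d ∈ S)
    {e : Edge d} (he : e ∈ edgeBoundary S) :
    trapped W ⁻¹' {S} ∩ innerReach S e ⊆ pivotal e (exitEvent W (origin d)) := by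
  rintro ω ⟨rfl, z, hz, hze, hconn⟩
  obtain ⟨x, hx, y, hy, h, rfl⟩ := exists_eq_edge_of_mem_edgeBoundary he
  obtain rfl : z = x := (Sym2.mem_iff.1 hze).resolve_right fun hzy => hy (hzy ▸ hz)
  have hopen : ω ≤ Function.update ω (edge h) true := le_update_self_iff.2 (Bool.le_true _)
  have hclosed : Function.update ω (edge h) false ≤ ω := update_le_self_iff.2 (Bool.false_le _)
  refine ⟨?_, fun hexit => mem_trapped.1 h0 (isUpperSet_exitEventIn _ W _ hclosed hexit)⟩
  have hy_exit : ω ∈ exitEvent W y := not_not.1 fun hexit => hy (mem_trapped.2 hexit)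
  have hz_exit := mem_exitEvent_of_step ⟨h, Function.update_self (edge h) true ω⟩
    (isUpperSet_exitEventIn _ W _ hopen hy_exit)
  exact mem_exitEventIn_of_connIn (connIn_univ.2 (hconn.mono hopen).conn) hz_exit

theorem productBernoulli_real_trapped_preimage_le
    (hp : p ∈ Set.Icc (0 : ℝ) 1) (h0 : origin d ∈ S) (hSW : S ⊆ W) (hphi : 1 ≤ phi p S) :
    (productBernoulli (Edge d) p).real (trapped W ⁻¹' {S}) ≤
      ∑ e ∈ edgesTouching W, (productBernoulli (Edge d) p).real
        (trapped W ⁻¹' {S} ∩ pivotal e (exitEvent W (origin d))) := by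
  set P := productBernoulli (Edge d) p
  have hindep (e : Edge d) : P.real (trapped W ⁻¹' {S} ∩ innerReach S e) =
      P.real (trapped W ⁻¹' {S}) * P.real (innerReach S e) :=
    infinitePi_real_inter_of_dependsOn (dependsOn_trapped_preimage S W)
      (dependsOn_innerReach S e) Finset.sdiff_disjoint
  calc P.real (trapped W ⁻¹' {S})
      ≤ phi p S * P.real (trapped W ⁻¹' {S}) := le_mul_of_one_le_left measureReal_nonneg hphi
    _ = p * ∑ e ∈ edgeBoundary S, P.real (trapped W ⁻¹' {S} ∩ innerReach S e) := by
        simp_rw [hindep, ← Finset.mul_sum, phi]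
        ring
    _ ≤ ∑ e ∈ edgeBoundary S, P.real (trapped W ⁻¹' {S} ∩ innerReach S e) :=
        mul_le_of_le_one_left (by positivity) hp.2
    _ ≤ ∑ e ∈ edgeBoundary S,
          P.real (trapped W ⁻¹' {S} ∩ pivotal e (exitEvent W (origin d))) :=
        Finset.sum_le_sum fun e he => measureReal_mono fun ω hω =>
          ⟨hω.1, trapped_preimage_inter_innerReach_subset_pivotal h0 he hω⟩
    _ ≤ ∑ e ∈ edgesTouching W,
          P.real (trapped W ⁻¹' {S} ∩ pivotal e (exitEvent W (origin d))) :=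
        Finset.sum_le_sum_of_subset_of_nonneg
          (Finset.sdiff_subset.trans (edgesTouching_mono hSW)) fun _ _ _ => measureReal_nonneg

theorem one_sub_productBernoulli_real_exitEvent_le_sum_pivotal
    (hp : p ∈ Set.Icc (0 : ℝ) 1) (hphi : ∀ S, origin d ∈ S → 1 ≤ phi p S)
    (W : Finset (Vertex d)) :
    1 - (productBernoulli (Edge d) p).real (exitEvent W (origin d)) ≤
      ∑ e ∈ edgesTouching W,
        (productBernoulli (Edge d) p).real (pivotal e (exitEvent W (origin d))) := by
  set P := productBernoulli (Edge d) p
  have hcover : (exitEvent W (origin d))ᶜ ⊆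
      ⋃ S ∈ {S ∈ W.powerset | origin d ∈ S}, trapped W ⁻¹' {S} := fun ω hω => by
    refine Set.mem_biUnion (x := trapped W ω) (Finset.mem_filter.2 ⟨?_, mem_trapped.2 hω⟩) rfl
    exact Finset.mem_powerset.2 (trapped_subset W ω)
  calc 1 - P.real (exitEvent W (origin d))
      = P.real (exitEvent W (origin d))ᶜ :=
        (probReal_compl_eq_one_sub (measurableSet_exitEvent W _)).symm
    _ ≤ ∑ S ∈ W.powerset with origin d ∈ S, P.real (trapped W ⁻¹' {S}) :=
        (measureReal_mono hcover (measure_ne_top _ _)).trans (measureReal_biUnion_finset_le _ _)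
    _ ≤ ∑ S ∈ W.powerset with origin d ∈ S, ∑ e ∈ edgesTouching W,
          P.real (trapped W ⁻¹' {S} ∩ pivotal e (exitEvent W (origin d))) := by
        refine Finset.sum_le_sum fun S hS => ?_
        obtain ⟨hSW, h0⟩ := Finset.mem_filter.1 hS
        exact productBernoulli_real_trapped_preimage_le hp h0 (Finset.mem_powerset.1 hSW)
          (hphi S h0)
    _ = ∑ e ∈ edgesTouching W, ∑ S ∈ W.powerset with origin d ∈ S,
          P.real (trapped W ⁻¹' {S} ∩ pivotal e (exitEvent W (origin d))) := Finset.sum_comm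
    _ ≤ ∑ e ∈ edgesTouching W, P.real (pivotal e (exitEvent W (origin d))) :=
        Finset.sum_le_sum fun e _ => sum_measureReal_preimage_singleton_inter_le fun S _ =>
          measurableSet_of_dependsOn (dependsOn_trapped_preimage S W)

theorem one_sub_exp_le_productBernoulli_real_exitEvent (hp : 0 < p) (hpq : p ≤ q) (hq : q < 1)
    (hphi : ∀ S, origin d ∈ S → 1 ≤ phi p S) (W : Finset (Vertex d)) :
    1 - Real.exp (p - q) ≤ (productBernoulli (Edge d) q).real (exitEvent W (origin d)) := by
  have hmem {x : ℝ} (hx : x ∈ Set.Icc p q) : x ∈ Set.Ioo (0 : ℝ) 1 :=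
    ⟨hp.trans_le hx.1, hx.2.trans_lt hq⟩
  refine one_sub_exp_le_of_one_sub_le_deriv
    (f := fun x => (productBernoulli (Edge d) x).real (exitEvent W (origin d))) hpq
    (fun x hx => hasDerivAt_productBernoulli_real (hmem hx) (isUpperSet_exitEventIn _ W _)
      (dependsOn_exitEvent W _)) (fun x hx => ?_) measureReal_nonneg
  exact one_sub_productBernoulli_real_exitEvent_le_sum_pivotal
    (Set.Ioo_subset_Icc_self (hmem hx))
    (fun S h0 => (hphi S h0).trans (phi_mono hp hx.1 (hmem hx).2 S)) W

end LowerBound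

section Boxes

variable {d m n : ℕ} {S : Finset (Vertex d)} {x : Vertex d} {p q : ℝ}

/-- The box `Λ_n` as a finite set of vertices. -/
noncomputable def boxFinset (d n : ℕ) : Finset (Vertex d) := Finset.Icc (fun _ => -n) fun _ => n

theorem mem_boxFinset : x ∈ boxFinset d n ↔ x ∈ box d n := by
  simp [boxFinset, box, Pi.le_def, abs_le, forall_and]

theorem origin_mem_boxFinset (d n : ℕ) : origin d ∈ boxFinset d n := by
  simp [mem_boxFinset, box, origin]

theorem boxFinset_mono (d : ℕ) : Monotone (boxFinset d) := fun m n hmn x hx =>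
  mem_boxFinset.2 fun i => (mem_boxFinset.1 hx i).trans (by exact_mod_cast hmn)

theorem exists_subset_boxFinset (S : Finset (Vertex d)) : ∃ n, S ⊆ boxFinset d n := by
  refine ⟨S.sup fun x => Finset.univ.sup fun i => (x i).natAbs, fun x hx =>
    mem_boxFinset.2 fun i => ?_⟩
  rw [Int.abs_eq_natAbs]
  exact_mod_cast (Finset.le_sup (f := fun i => (x i).natAbs) (Finset.mem_univ i)).trans
    (Finset.le_sup (f := fun x : Vertex d => Finset.univ.sup fun i => (x i).natAbs) hx)

theorem zeroToBoundary_succ_subset_exitEvent (d n : ℕ) :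
    ZeroToBoundary d (n + 1) ⊆ exitEvent (boxFinset d n) (origin d) := by
  rintro ω ⟨y, ⟨-, w, hadj, hw⟩, hy⟩
  refine ⟨y, fun hyn => hw fun i => ?_, connIn_univ.2 hy⟩
  have hyi := abs_le.1 (mem_boxFinset.1 hyn i)
  have hstep := abs_le.1 (hadj.abs_sub_le_one i)
  rw [abs_le]
  push_cast
  omega

theorem iInter_exitEvent_boxFinset_subset (d : ℕ) :
    ⋂ n, exitEvent (boxFinset d n) (origin d) ⊆ ZeroToInfinity d := by
  intro ω hω hfinite
  obtain ⟨n, hn⟩ := exists_subset_boxFinset (Set.Finite.toFinset hfinite)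
  obtain ⟨z, hz, hconn⟩ := Set.mem_iInter.1 hω n
  exact hz (hn ((Set.Finite.mem_toFinset hfinite).2 (connIn_univ.1 hconn)))

theorem tendsto_productBernoulli_real_exitEvent_boxFinset
    (hθ : productBernoulli (Edge d) p (ZeroToInfinity d) = 0) :
    Tendsto (fun n => (productBernoulli (Edge d) p).real (exitEvent (boxFinset d n) (origin d)))
      atTop (𝓝 0) := by
  have hlim := tendsto_measure_iInter_atTop (μ := productBernoulli (Edge d) p)
    (fun n => (measurableSet_exitEvent (boxFinset d n) (origin d)).nullMeasurableSet)
    (fun m n hmn => exitEvent_antitone (boxFinset_mono d hmn) (origin d))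
    ⟨0, measure_ne_top _ _⟩
  rw [measure_mono_null (iInter_exitEvent_boxFinset_subset d) hθ] at hlim
  exact (ENNReal.tendsto_toReal ENNReal.zero_ne_top).comp hlim

theorem exists_phi_lt_one (hp : 0 < p) (hpq : p < q) (hq : q < 1)
    (hθ : productBernoulli (Edge d) q (ZeroToInfinity d) = 0) :
    ∃ S, origin d ∈ S ∧ phi p S < 1 := by
  by_contra! hphi
  have hle : 1 - Real.exp (p - q) ≤ 0 :=
    ge_of_tendsto' (tendsto_productBernoulli_real_exitEvent_boxFinset hθ) fun n =>
      one_sub_exp_le_productBernoulli_real_exitEvent hp hpq.le hq hphi (boxFinset d n)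
  have hexp : Real.exp (p - q) < 1 := Real.exp_lt_one_iff.2 (sub_neg.2 hpq)
  linarith

theorem productBernoulli_real_exitEvent_boxFinset_add_le (hp : p ∈ Set.Icc (0 : ℝ) 1)
    (h0 : origin d ∈ S) (hS : S ⊆ boxFinset d m) (n : ℕ) :
    (productBernoulli (Edge d) p).real (exitEvent (boxFinset d (n + (m + 1))) (origin d)) ≤
      phi p S * (productBernoulli (Edge d) p).real (exitEvent (boxFinset d n) (origin d)) := by
  refine productBernoulli_real_exitEvent_le_phi_mul hp h0
    (hS.trans (boxFinset_mono d (by omega))) fun x hx y _ hxy => ?_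
  have htranslate (z : Vertex d) (hz : z ∈ boxFinset d n) :
      z + y ∈ boxFinset d (n + (m + 1)) := mem_boxFinset.2 fun i => by
    have hxi := abs_le.1 (mem_boxFinset.1 (hS hx) i)
    have hzi := abs_le.1 (mem_boxFinset.1 hz i)
    have hstep := abs_le.1 (hxy.abs_sub_le_one i)
    rw [Pi.add_apply, abs_le]
    push_cast
    omega
  have hle := productBernoulli_real_exitEvent_le_translate (p := p) htranslate y
  rwa [sub_self] at hle

theorem exists_forall_productBernoulli_zeroToBoundary_le (hp : p ∈ Set.Ico (0 : ℝ) 1)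
    (h0 : origin d ∈ S) (hphi : phi p S < 1) :
    ∃ c > 0, ∀ n : ℕ, productBernoulli (Edge d) p (ZeroToBoundary d n) ≤
      ENNReal.ofReal (Real.exp (-c * n)) := by
  obtain ⟨m, hm⟩ := exists_subset_boxFinset S
  obtain ⟨c, hc, hdecay⟩ := exists_forall_le_exp_of_le_mul
    (a := fun n => (productBernoulli (Edge d) p).real (exitEvent (boxFinset d n) (origin d)))
    (fun m n hmn => measureReal_mono (exitEvent_antitone (boxFinset_mono d hmn) _))
    (fun n => measureReal_nonneg)
    (productBernoulli_real_exitEvent_lt_one hp (origin_mem_boxFinset d 0)) hphi m.succ_pos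
    (productBernoulli_real_exitEvent_boxFinset_add_le (Set.Ico_subset_Icc_self hp) h0 hm)
  refine ⟨c, hc, fun n => ?_⟩
  cases n with
  | zero => simpa using prob_le_one
  | succ n =>
    calc productBernoulli (Edge d) p (ZeroToBoundary d (n + 1))
        ≤ productBernoulli (Edge d) p (exitEvent (boxFinset d n) (origin d)) :=
          measure_mono (zeroToBoundary_succ_subset_exitEvent d n)
      _ ≤ ENNReal.ofReal (Real.exp (-c * (n + 1 : ℕ))) :=
          (ENNReal.le_ofReal_iff_toReal_le (measure_ne_top _ _) (Real.exp_nonneg _)).2 (hdecay n)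

end Boxes

theorem subcritical_sharpness_general {d : ℕ} {p q : ℝ} {ν ν' : Measure (Config d)}
    (hp : 0 < p) (hpq : p < q) (hq : q < 1) (hν : IsBernoulli d p ν) (hν' : IsBernoulli d q ν')
    (hθ : ν' (ZeroToInfinity d) = 0) :
    ∃ c > 0, ∀ n : ℕ, ν (ZeroToBoundary d n) ≤ ENNReal.ofReal (Real.exp (-c * n)) := by
  have hp1 : p < 1 := hpq.trans hq
  rw [hν'.eq_productBernoulli ⟨(hp.trans hpq).le, hq.le⟩] at hθ
  rw [hν.eq_productBernoulli ⟨hp.le, hp1.le⟩]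
  obtain ⟨S, h0, hphi⟩ := exists_phi_lt_one hp hpq hq hθ
  exact exists_forall_productBernoulli_zeroToBoundary_le ⟨hp.le, hp1⟩ h0 hphi

/-- Sharpness of the phase transition (Duminil-Copin–Tassion): for every `d ≥ 2` and every
`p ∈ (0,1)` with `p < p_c(ℤ^d)`, there exists `c = c(p) > 0` such that
`ℙ_p[0 ↔ ∂Λ_n] ≤ exp(−c·n)` for all `n ≥ 1`. -/
theorem subcritical_sharpness
    (d : ℕ) (hd : 2 ≤ d)
    (μ : ℝ → Measure (Config d))
    (hμ : ∀ p ∈ Set.Ioo (0 : ℝ) 1, IsBernoulli d p (μ p))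
    (p : ℝ) (hp : p ∈ Set.Ioo (0 : ℝ) 1)
    (hsub : p < sSup {q : ℝ | q ∈ Set.Ioo (0 : ℝ) 1 ∧ μ q (ZeroToInfinity d) = 0}) :
    ∃ c : ℝ, 0 < c ∧ ∀ n : ℕ, 1 ≤ n →
      μ p (ZeroToBoundary d n) ≤ ENNReal.ofReal (Real.exp (-c * n)) := by
  have hne : {q : ℝ | q ∈ Set.Ioo (0 : ℝ) 1 ∧ μ q (ZeroToInfinity d) = 0}.Nonempty :=
    Set.nonempty_iff_ne_empty.2 fun hempty => by
      rw [hempty, Real.sSup_empty] at hsub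
      exact hsub.not_gt hp.1
  obtain ⟨q, ⟨hq, hθ⟩, hpq⟩ := exists_lt_of_lt_csSup hne hsub
  obtain ⟨c, hc, hdecay⟩ := subcritical_sharpness_general hp.1 hpq hq.2 (hμ p hp) (hμ q hq) hθ
  exact ⟨c, hc, fun n _ => hdecay n⟩

end Perc
end
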